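/- Let η(t) = t² e^{−t²/2}, let δ ∈ ℝ, and let G_δ be the Mellin transform of η(t)e(δt). Let χ be a primitive Dirichlet character mod q, q ≥ 1. Assume all nontrivial zeros ρ of L(s,χ) with |Im(ρ)| ≤ T₀ satisfy Re(ρ) = 1/2, where T₀ ≥ max(4π²|δ|, 100). Then ∑_{ρ nontrivial, |Im(ρ)| > T₀} |G_δ(ρ)| ≤ T₀ log(qT₀/2π) · (3.5 e^{−0.1598 T₀} + 0.64 e^{−0.1065 T₀²/(πδ)²}). -/

import Mathlib

open MeasureTheory Set

/-- `e(t) = e^{2πit}`. -/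
noncomputable def e2pi (t : ℝ) : ℂ := Complex.exp (2 * Real.pi * Complex.I * t)

/-- `G_δ`, the Mellin transform of `η(t) e(δt)` with `η(t) = t² e^{-t²/2}`. -/
noncomputable def Gdelta (δ : ℝ) (s : ℂ) : ℂ :=
  mellin (fun t => ((t^2 * Real.exp (-t^2 / 2) : ℝ) : ℂ) * e2pi (δ * t)) s

/-!
Rotating the ray of integration by an angle `±θ` towards a zero `ρ = β + iγ` bounds `|G_δ(ρ)|` by
`e^{-θ|γ|}` times a Gaussian integral over a half-line. For `(3/2) θ² (s² + 9/4) ≤ 1`, the factor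
`e^{-θ(|γ| - T)}` is dominated by the Blaschke kernel `log (|w + 1 + conj ρ| / |w - ρ|)` at
`w = s - 1/2 ± iT`, up to a constant. These kernels can be summed over the zeros: the quotient
`2π (v - 1) L(v, χ) / (q (v + 1) (v + 2) L(v + 2, χ))` has modulus at most `1` on `Re v = -1/2` by
the functional equation, hence on the half-plane to the right by Phragmén–Lindelöf, and there it is
bounded by the Blaschke product over any finite set of nontrivial zeros. Taking logarithms at `w`
bounds the sum of the kernels by `1.22 log (qT / 2π)`. The half-line integrals of the zeros in the
upper and lower half-planes combine to a full Gaussian moment, and the choice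
`θ = (14/75) T / max ((πδ)², 2T/3)` gives the constants.
-/

open scoped ComplexConjugate

section Blaschke

lemma norm_ofReal_mul_I_add_conj (x : ℝ) (a : ℂ) :
    ‖x * Complex.I + conj a‖ = ‖x * Complex.I - a‖ := by
  rw [← Complex.norm_conj, ← norm_neg]
  congr 1
  simp only [map_add, map_mul, Complex.conj_ofReal, Complex.conj_I, Complex.conj_conj]
  ring

lemma add_conj_ne_zero {z a : ℂ} (hz : 0 ≤ z.re) (ha : 0 < a.re) : z + conj a ≠ 0 := by
  intro h
  have : z.re + a.re = 0 := by simpa using congrArg Complex.re h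
  linarith

lemma norm_add_conj_div_norm_sub_le {z a : ℂ} (h : 2 * ‖a‖ < ‖z‖) :
    ‖z + conj a‖ / ‖z - a‖ ≤ 3 := by
  have hlow : ‖z‖ - ‖a‖ ≤ ‖z - a‖ := norm_sub_norm_le z a
  have hup : ‖z + conj a‖ ≤ ‖z‖ + ‖a‖ := by simpa using norm_add_le z (conj a)
  have ha : 0 ≤ ‖a‖ := norm_nonneg a
  rw [div_le_iff₀ (by linarith)]
  linarith

lemma diffContOnCl_dslope {f : ℂ → ℂ} {U : Set ℂ} {a : ℂ} (hU : IsOpen U) (ha : a ∈ U)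
    (hf : DiffContOnCl ℂ f U) : DiffContOnCl ℂ (dslope f a) U where
  differentiableOn := (Complex.differentiableOn_dslope (hU.mem_nhds ha)).2 hf.differentiableOn
  continuousOn := (continuousOn_dslope
    (Filter.mem_of_superset (hU.mem_nhds ha) subset_closure)).2
    ⟨hf.continuousOn, hf.differentiableAt hU ha⟩

variable {f : ℂ → ℂ} {a : ℂ}

lemma dslope_mul_add_conj (hfa : f a = 0) {z : ℂ} (hz : z ≠ a) :
    dslope f a z * (z + conj a) = f z * ((z + conj a) / (z - a)) := by
  rw [dslope_of_ne _ hz, slope_def_field, hfa]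
  ring

/-- Dividing by a Blaschke factor does not change the modulus on the imaginary axis, so
Phragmén–Lindelöf gives back the bound. -/
lemma norm_dslope_mul_add_conj_le_one (hf : DiffContOnCl ℂ f {z | 0 < z.re})
    (hf₁ : ∀ z : ℂ, 0 ≤ z.re → ‖f z‖ ≤ 1) (ha : 0 < a.re) (hfa : f a = 0) {z : ℂ}
    (hz : 0 ≤ z.re) : ‖dslope f a z * (z + conj a)‖ ≤ 1 := by
  have hbig : ∀ z : ℂ, 0 ≤ z.re → 2 * ‖a‖ < ‖z‖ → ‖dslope f a z * (z + conj a)‖ ≤ 3 := by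
    intro z hz hza
    have hne : z ≠ a := by
      rintro rfl
      linarith [norm_nonneg z]
    rw [dslope_mul_add_conj hfa hne, norm_mul, norm_div]
    exact (mul_le_mul (hf₁ z hz) (norm_add_conj_div_norm_sub_le hza) (by positivity)
      zero_le_one).trans_eq (one_mul 3)
  refine PhragmenLindelof.right_half_plane_of_bounded_on_real
    (f := fun z => dslope f a z * (z + conj a)) ?_ ⟨1, by norm_num, 0, .of_bound 3 ?_⟩
    ⟨3, Filter.eventually_map.2 ?_⟩ (fun x => ?_) hz
  · exact (diffContOnCl_dslope (isOpen_lt continuous_const Complex.continuous_re) ha hf).smul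
      (Differentiable.diffContOnCl (by fun_prop))
  · rw [Filter.eventually_inf_principal]
    filter_upwards [tendsto_norm_cobounded_atTop.eventually (Filter.eventually_gt_atTop (2 * ‖a‖))]
      with z hza hz
    simpa using hbig z (le_of_lt hz) hza
  · filter_upwards [Filter.eventually_gt_atTop (2 * ‖a‖), Filter.eventually_ge_atTop 0]
      with x hx hx₀
    exact hbig x (by simpa using hx₀) (by simpa [abs_of_nonneg hx₀] using hx)
  · have hne : x * Complex.I ≠ a := by
      rintro rfl
      simp at ha
    rw [dslope_mul_add_conj hfa hne, norm_mul, norm_div, norm_ofReal_mul_I_add_conj,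
      div_self (norm_ne_zero_iff.2 (sub_ne_zero.2 hne)), mul_one]
    exact hf₁ _ (by simp)

theorem norm_le_prod_blaschke (S : Finset ℂ) (hf : DiffContOnCl ℂ f {z | 0 < z.re})
    (hf₁ : ∀ z : ℂ, 0 ≤ z.re → ‖f z‖ ≤ 1) (hS : ∀ a ∈ S, 0 < a.re ∧ f a = 0) {z : ℂ}
    (hz : 0 ≤ z.re) : ‖f z‖ ≤ ∏ a ∈ S, ‖(z - a) / (z + conj a)‖ := by
  classical
  induction S using Finset.induction_on generalizing f with
  | empty => simpa using hf₁ z hz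
  | insert a S haS ih =>
    obtain ⟨ha, hfa⟩ := hS a (Finset.mem_insert_self _ _)
    have hquot : ‖dslope f a z * (z + conj a)‖ ≤ ∏ b ∈ S, ‖(z - b) / (z + conj b)‖ := by
      refine ih (f := fun z => dslope f a z * (z + conj a)) ?_
        (fun _ => norm_dslope_mul_add_conj_le_one hf hf₁ ha hfa) fun b hb => ?_
      · exact (diffContOnCl_dslope (isOpen_lt continuous_const Complex.continuous_re) ha hf).smul
          (Differentiable.diffContOnCl (by fun_prop))
      · obtain ⟨hb₀, hfb⟩ := hS b (Finset.mem_insert_of_mem hb)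
        have hba : b ≠ a := fun h => haS (h ▸ hb)
        exact ⟨hb₀, by rw [dslope_mul_add_conj hfa hba, hfb, zero_mul]⟩
    have hfactor : f z = (z - a) / (z + conj a) * (dslope f a z * (z + conj a)) := by
      have hne := add_conj_ne_zero hz ha
      have := sub_smul_dslope f a z
      rw [hfa, sub_zero, smul_eq_mul] at this
      rw [← this]
      field_simp
    rw [Finset.prod_insert haS, hfactor, norm_mul]
    gcongr

end Blaschke

section VerticalStrips

lemma exists_norm_mellin_le {E : Type*} [NormedAddCommGroup E] [NormedSpace ℂ E] {f : ℝ → E}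
    {a b : ℝ} (hfa : MellinConvergent f a) (hfb : MellinConvergent f b) :
    ∃ C, ∀ s : ℂ, s.re ∈ Icc a b → ‖mellin f s‖ ≤ C := by
  refine ⟨∫ t in Ioi (0 : ℝ), (‖(t : ℂ) ^ ((a : ℂ) - 1) • f t‖ + ‖(t : ℂ) ^ ((b : ℂ) - 1) • f t‖),
    fun s hs => norm_integral_le_of_norm_le (hfa.norm.add hfb.norm) ?_⟩
  refine (ae_restrict_iff' measurableSet_Ioi).2 (.of_forall fun t (ht : 0 < t) => ?_)
  simp only [norm_smul, ← add_mul, Complex.norm_cpow_eq_rpow_re_of_pos ht, Complex.sub_re,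
    Complex.ofReal_re, Complex.one_re]
  gcongr
  rcases le_total 1 t with h | h
  · exact le_add_of_nonneg_of_le (by positivity)
      (Real.rpow_le_rpow_of_exponent_le h (by linarith [hs.2]))
  · exact le_add_of_le_of_nonneg
      (Real.rpow_le_rpow_of_exponent_ge ht h (by linarith [hs.1])) (by positivity)

lemma exists_norm_Λ₀_le {E : Type*} [NormedAddCommGroup E] [NormedSpace ℂ E] [CompleteSpace E]
    (P : WeakFEPair E) (a b : ℝ) :
    ∃ C, ∀ s : ℂ, s.re ∈ Icc a b → ‖P.Λ₀ s‖ ≤ C :=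
  exists_norm_mellin_le (P.isStrongFEPair_toStrongFEPair.hasMellin a).1
    (P.isStrongFEPair_toStrongFEPair.hasMellin b).1

lemma exists_norm_completedHurwitzZetaEven₀_le (x : UnitAddCircle) (a b : ℝ) :
    ∃ C, ∀ s : ℂ, s.re ∈ Icc a b → ‖HurwitzZeta.completedHurwitzZetaEven₀ x s‖ ≤ C := by
  obtain ⟨C, hC⟩ := exists_norm_Λ₀_le (HurwitzZeta.hurwitzEvenFEPair x) (a / 2) (b / 2)
  refine ⟨C / 2, fun s hs => ?_⟩
  have := hC (s / 2) (by
    simp only [Complex.div_ofNat_re, mem_Icc] at hs ⊢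
    constructor <;> linarith)
  simpa [HurwitzZeta.completedHurwitzZetaEven₀] using div_le_div_of_nonneg_right this zero_le_two

lemma exists_norm_completedHurwitzZetaOdd_le (x : UnitAddCircle) (a b : ℝ) :
    ∃ C, ∀ s : ℂ, s.re ∈ Icc a b → ‖HurwitzZeta.completedHurwitzZetaOdd x s‖ ≤ C := by
  obtain ⟨C, hC⟩ := exists_norm_Λ₀_le (HurwitzZeta.hurwitzOddFEPair x) ((a + 1) / 2) ((b + 1) / 2)
  refine ⟨C / 2, fun s hs => ?_⟩
  have hΛ : (HurwitzZeta.hurwitzOddFEPair x).Λ ((s + 1) / 2) =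
      (HurwitzZeta.hurwitzOddFEPair x).Λ₀ ((s + 1) / 2) := by
    simp [WeakFEPair.Λ, HurwitzZeta.hurwitzOddFEPair]
  have := hC ((s + 1) / 2) (by
    simp only [Complex.div_ofNat_re, Complex.add_re, Complex.one_re, mem_Icc] at hs ⊢
    constructor <;> linarith)
  simpa [HurwitzZeta.completedHurwitzZetaOdd, hΛ] using div_le_div_of_nonneg_right this zero_le_two

lemma norm_div_le_norm_of_one_le_abs_im {z w : ℂ} (hw : 1 ≤ |w.im|) : ‖z / w‖ ≤ ‖z‖ := by
  rw [norm_div]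
  exact div_le_self (norm_nonneg z) (hw.trans (Complex.abs_im_le_norm w))

lemma exists_norm_completedLFunction_le {N : ℕ} [NeZero N] (Φ : ZMod N → ℂ) (a b : ℝ) :
    ∃ C, ∀ s : ℂ, s.re ∈ Icc a b → 1 ≤ |s.im| → ‖ZMod.completedLFunction Φ s‖ ≤ C := by
  choose Ce hCe using fun j : ZMod N =>
    exists_norm_completedHurwitzZetaEven₀_le (ZMod.toAddCircle j) a b
  choose Co hCo using fun j : ZMod N =>
    exists_norm_completedHurwitzZetaOdd_le (ZMod.toAddCircle j) a b
  refine ⟨(N : ℝ) ^ (-a) * ∑ j, ‖Φ j‖ * Ce j + (N : ℝ) ^ (-a) * ∑ j, ‖Φ j‖ * Co j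
    + (N : ℝ) ^ (-a) * ‖Φ 0‖ + (N : ℝ) ^ (-a) * ‖∑ j, Φ j‖, fun s hs him => ?_⟩
  have hN : ‖(N : ℂ) ^ (-s)‖ ≤ (N : ℝ) ^ (-a) := by
    rw [Complex.norm_natCast_cpow_of_pos (NeZero.pos N)]
    exact Real.rpow_le_rpow_of_exponent_le (by exact_mod_cast NeZero.one_le)
      (neg_le_neg hs.1)
  have hsum : ∀ (F : ZMod N → ℂ) (C : ZMod N → ℝ), (∀ j, ‖F j‖ ≤ C j) →
      ‖(N : ℂ) ^ (-s) * ∑ j, Φ j * F j‖ ≤ (N : ℝ) ^ (-a) * ∑ j, ‖Φ j‖ * C j := by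
    intro F C hF
    rw [norm_mul]
    refine mul_le_mul hN (norm_sum_le_of_le _ fun j _ => ?_) (norm_nonneg _) (by positivity)
    rw [norm_mul]
    exact mul_le_mul_of_nonneg_left (hF j) (norm_nonneg _)
  have hpole : ∀ c w : ℂ, 1 ≤ |w.im| → ‖(N : ℂ) ^ (-s) * c / w‖ ≤ (N : ℝ) ^ (-a) * ‖c‖ := by
    intro c w hw
    refine (norm_div_le_norm_of_one_le_abs_im hw).trans ?_
    rw [norm_mul]
    gcongr
  rw [ZMod.completedLFunction_eq, ZMod.completedLFunction₀]
  exact norm_sub_le_of_le (norm_sub_le_of_le (norm_add_le_of_le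
    (hsum _ _ fun j => hCe j s hs) (hsum _ _ fun j => hCo j s hs))
    (hpole _ _ him)) (hpole _ _ (by simpa using him))

lemma norm_Gamma_le_norm_Gamma_add_natCast {s : ℂ} (hs : 1 ≤ |s.im|) (n : ℕ) :
    ‖Complex.Gamma s‖ ≤ ‖Complex.Gamma (s + n)‖ := by
  induction n with
  | zero => simp
  | succ n ih =>
    have him : 1 ≤ ‖s + n‖ := hs.trans (by simpa using Complex.abs_im_le_norm (s + n))
    rw [Nat.cast_succ, ← add_assoc, Complex.Gamma_add_one _ (norm_pos_iff.1 (by linarith)),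
      norm_mul]
    exact ih.trans (le_mul_of_one_le_left (norm_nonneg _) him)

lemma exists_norm_Gamma_le (a b : ℝ) :
    ∃ C, ∀ s : ℂ, s.re ∈ Icc a b → 1 ≤ |s.im| → ‖Complex.Gamma s‖ ≤ C := by
  obtain ⟨n, hn⟩ := exists_nat_gt (-a)
  by_cases hab : a ≤ b
  swap
  · exact ⟨0, fun s hs => absurd (hs.1.trans hs.2) hab⟩
  have hconv : ∀ c : ℝ, 0 < c →
      MellinConvergent (fun x : ℝ => ((Real.exp (-x) : ℝ) : ℂ)) c := fun c hc =>
    (Complex.GammaIntegral_convergent (s := c) (by simpa using hc)).congr_fun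
      (fun x _ => by simp [mul_comm]) measurableSet_Ioi
  obtain ⟨C, hC⟩ := exists_norm_mellin_le (hconv (a + n) (by linarith))
    (hconv (b + n) (by linarith))
  refine ⟨C, fun s hs him => (norm_Gamma_le_norm_Gamma_add_natCast him n).trans ?_⟩
  have hre : (s + n).re ∈ Icc (a + n) (b + n) := by simpa using hs
  rw [Complex.Gamma_eq_integral (by linarith [hre.1]), Complex.GammaIntegral_eq_mellin]
  exact hC _ hre

lemma norm_sin_le_exp_abs_im (w : ℂ) : ‖Complex.sin w‖ ≤ Real.exp |w.im| := by
  have hneg : ‖Complex.exp (-w * Complex.I)‖ ≤ Real.exp |w.im| := by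
    simpa [Complex.norm_exp] using le_abs_self w.im
  have hpos : ‖Complex.exp (w * Complex.I)‖ ≤ Real.exp |w.im| := by
    simpa [Complex.norm_exp] using neg_le_abs w.im
  rw [Complex.sin, norm_div, norm_mul, Complex.norm_I, mul_one, RCLike.norm_ofNat]
  linarith [norm_sub_le_of_le hneg hpos]

lemma inv_Gamma_eq {z : ℂ} (hz : z.im ≠ 0) :
    (Complex.Gamma z)⁻¹ = Complex.Gamma (1 - z) * (Complex.sin (Real.pi * z) / Real.pi) := by
  have hsin : Complex.sin (Real.pi * z) ≠ 0 := by
    rw [Complex.sin_ne_zero_iff]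
    intro k hk
    exact hz (by simpa [Real.pi_ne_zero] using congrArg Complex.im hk)
  have hpi : (Real.pi : ℂ) ≠ 0 := by exact_mod_cast Real.pi_ne_zero
  refine inv_eq_of_mul_eq_one_right ?_
  rw [← mul_assoc, Complex.Gamma_mul_Gamma_one_sub]
  field_simp

lemma exists_norm_inv_Gamma_le (a b : ℝ) :
    ∃ C, ∀ s : ℂ, s.re ∈ Icc a b → 1 ≤ |s.im| →
      ‖(Complex.Gamma s)⁻¹‖ ≤ C * Real.exp (Real.pi * |s.im|) := by
  obtain ⟨C, hC⟩ := exists_norm_Gamma_le (1 - b) (1 - a)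
  refine ⟨C, fun s hs him => ?_⟩
  have hΓ : ‖Complex.Gamma (1 - s)‖ ≤ C :=
    hC _ ⟨sub_le_sub_left hs.2 1, sub_le_sub_left hs.1 1⟩ (by simpa using him)
  have hsin : ‖Complex.sin (Real.pi * s) / Real.pi‖ ≤ Real.exp (Real.pi * |s.im|) := by
    rw [norm_div, Complex.norm_real, Real.norm_of_nonneg Real.pi_pos.le]
    refine (div_le_self (norm_nonneg _) (by linarith [Real.pi_gt_three])).trans ?_
    simpa [abs_mul, abs_of_pos Real.pi_pos] using norm_sin_le_exp_abs_im (Real.pi * s)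
  rw [inv_Gamma_eq (abs_pos.1 (by linarith)), norm_mul]
  exact mul_le_mul hΓ hsin (norm_nonneg _) ((norm_nonneg _).trans hΓ)

lemma exists_norm_inv_Gammaℝ_le (a b : ℝ) :
    ∃ C, ∀ s : ℂ, s.re ∈ Icc a b → 2 ≤ |s.im| →
      ‖(Complex.Gammaℝ s)⁻¹‖ ≤ C * Real.exp (Real.pi * |s.im|) := by
  obtain ⟨C, hC⟩ := exists_norm_inv_Gamma_le (a / 2) (b / 2)
  refine ⟨Real.pi ^ (b / 2) * C, fun s hs him => ?_⟩
  have him₂ : |(s / 2).im| = |s.im| / 2 := by simp [abs_div]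
  have hΓ := hC (s / 2)
    ⟨by simpa using div_le_div_of_nonneg_right hs.1 zero_le_two,
      by simpa using div_le_div_of_nonneg_right hs.2 zero_le_two⟩ (by rw [him₂]; linarith)
  have hC₀ : 0 ≤ C := nonneg_of_mul_nonneg_left ((norm_nonneg _).trans hΓ) (Real.exp_pos _)
  have hpow : ‖((Real.pi : ℂ) ^ (-s / 2))⁻¹‖ ≤ Real.pi ^ (b / 2) := by
    rw [norm_inv, Complex.norm_cpow_eq_rpow_re_of_pos Real.pi_pos,
      ← Real.rpow_neg Real.pi_pos.le]
    refine Real.rpow_le_rpow_of_exponent_le (by linarith [Real.pi_gt_three]) ?_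
    simp only [Complex.div_ofNat_re, Complex.neg_re]
    linarith [hs.2]
  rw [Complex.Gammaℝ_def, mul_inv, norm_mul, mul_assoc]
  refine mul_le_mul hpow (hΓ.trans ?_) (norm_nonneg _) (by positivity)
  rw [him₂]
  gcongr
  linarith [abs_nonneg s.im]

lemma exists_norm_inv_gammaFactor_le {N : ℕ} (χ : DirichletCharacter ℂ N) (a b : ℝ) :
    ∃ C, ∀ s : ℂ, s.re ∈ Icc a b → 2 ≤ |s.im| →
      ‖(χ.gammaFactor s)⁻¹‖ ≤ C * Real.exp (Real.pi * |s.im|) := by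
  rcases χ.even_or_odd with h | h
  · simp only [h.gammaFactor_def]
    exact exists_norm_inv_Gammaℝ_le a b
  · obtain ⟨C, hC⟩ := exists_norm_inv_Gammaℝ_le (a + 1) (b + 1)
    refine ⟨C, fun s hs him => ?_⟩
    simpa [h.gammaFactor_def] using hC (s + 1) (by simpa using hs) (by simpa using him)

theorem exists_norm_LFunction_le_exp {N : ℕ} [NeZero N] (χ : DirichletCharacter ℂ N) (a b : ℝ) :
    ∃ C, ∀ s : ℂ, s.re ∈ Icc a b → 2 ≤ |s.im| →
      ‖χ.LFunction s‖ ≤ C * Real.exp (Real.pi * |s.im|) := by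
  obtain ⟨C₁, hC₁⟩ := exists_norm_completedLFunction_le (N := N) χ a b
  obtain ⟨C₂, hC₂⟩ := exists_norm_inv_gammaFactor_le χ a b
  refine ⟨C₁ * C₂, fun s hs him => ?_⟩
  have hs₀ : s ≠ 0 := by
    rintro rfl
    norm_num at him
  have hΛ : ‖χ.completedLFunction s‖ ≤ C₁ := hC₁ s hs (by linarith)
  rw [DirichletCharacter.LFunction_eq_completed_div_gammaFactor χ s (Or.inl hs₀), div_eq_mul_inv,
    norm_mul, mul_assoc]
  exact mul_le_mul hΛ (hC₂ s hs him) (norm_nonneg _) ((norm_nonneg _).trans hΛ)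

end VerticalStrips

section DirichletSeries

lemma norm_LSeries_le_tsum {f : ℕ → ℂ} (hf : ∀ n, ‖f n‖ ≤ 1) {k : ℝ} (hk : 1 < k) {s : ℂ}
    (hs : k ≤ s.re) : ‖LSeries f s‖ ≤ ∑' n : ℕ, 1 / (n : ℝ) ^ k := by
  refine tsum_of_norm_bounded (Real.summable_one_div_nat_rpow.2 hk).hasSum fun n => ?_
  rw [LSeries.norm_term_eq]
  split_ifs with hn
  · positivity
  · exact div_le_div₀ zero_le_one (hf n) (by positivity) (Real.rpow_le_rpow_of_exponent_le
      (by exact_mod_cast Nat.one_le_iff_ne_zero.2 hn) hs)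

variable {N : ℕ} [NeZero N] (χ : DirichletCharacter ℂ N)

lemma norm_LFunction_le_tsum {k : ℝ} (hk : 1 < k) {s : ℂ} (hs : k ≤ s.re) :
    ‖χ.LFunction s‖ ≤ ∑' n : ℕ, 1 / (n : ℝ) ^ k := by
  rw [χ.LFunction_eq_LSeries (by linarith)]
  exact norm_LSeries_le_tsum (fun n => χ.norm_le_one n) hk hs

lemma norm_inv_LFunction_le_tsum {k : ℝ} (hk : 1 < k) {s : ℂ} (hs : k ≤ s.re) :
    ‖(χ.LFunction s)⁻¹‖ ≤ ∑' n : ℕ, 1 / (n : ℝ) ^ k := by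
  rw [χ.LFunction_eq_LSeries (by linarith), inv_eq_of_mul_eq_one_right
    (DirichletCharacter.LSeries.mul_mu_eq_one χ (by linarith))]
  refine norm_LSeries_le_tsum (fun n => ?_) hk hs
  rw [Pi.mul_apply, norm_mul]
  refine mul_le_one₀ (χ.norm_le_one _) (norm_nonneg _) ?_
  rw [Complex.norm_intCast]
  exact_mod_cast ArithmeticFunction.abs_moebius_le_one

lemma norm_LFunction_inv_conj {s : ℂ} (hs : 1 < s.re) :
    ‖χ⁻¹.LFunction (conj s)‖ = ‖χ.LFunction s‖ := by
  rw [χ.LFunction_eq_LSeries hs, χ⁻¹.LFunction_eq_LSeries (by simpa using hs),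
    ← Complex.norm_conj (LSeries _ s), LSeries, LSeries, Complex.conj_tsum]
  congr 1
  refine tsum_congr fun n => ?_
  rw [LSeries.term_def, LSeries.term_def]
  split_ifs
  · rw [map_zero]
  · rw [map_div₀, ← MulChar.star_apply', RCLike.star_def,
      Complex.cpow_conj _ _ (by rw [Complex.natCast_arg]; exact Real.pi_pos.ne),
      Complex.conj_natCast]

end DirichletSeries

section FunctionalEquation

lemma norm_gaussSum_inv {N : ℕ} [NeZero N] (χ : DirichletCharacter ℂ N) :
    ‖gaussSum χ⁻¹ (ZMod.stdAddChar (N := N))‖ = ‖gaussSum χ (ZMod.stdAddChar (N := N))‖ := by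
  have hneg : (ZMod.stdAddChar (N := N))⁻¹ =
      (ZMod.stdAddChar (N := N)).mulShift ((-1 : (ZMod N)ˣ) : ZMod N) := by
    rw [AddChar.inv_mulShift, Units.val_neg, Units.val_one]
  have hstar := congrArg norm (star_gaussSum_eq χ (ZMod.stdAddChar (N := N)))
  rw [hneg, gaussSum_mulShift_eq, norm_mul, inv_inv, DirichletCharacter.unit_norm_eq_one, one_mul,
    norm_star] at hstar
  exact hstar.symm

lemma norm_rootNumber_inv {N : ℕ} [NeZero N] (χ : DirichletCharacter ℂ N) :
    ‖χ⁻¹.rootNumber‖ = ‖χ.rootNumber‖ := by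
  simp only [DirichletCharacter.rootNumber, norm_div, norm_pow, Complex.norm_I, one_pow,
    norm_gaussSum_inv]

lemma gammaFactor_ne_zero_of_re_pos {N : ℕ} (χ : DirichletCharacter ℂ N) {s : ℂ}
    (hs : 0 < s.re) : χ.gammaFactor s ≠ 0 := by
  rcases χ.even_or_odd with h | h
  · rw [h.gammaFactor_def]
    exact Complex.Gammaℝ_ne_zero_of_re_pos hs
  · rw [h.gammaFactor_def]
    exact Complex.Gammaℝ_ne_zero_of_re_pos (hs.trans (by simp))

lemma completedLFunction_eq_mul_gammaFactor {N : ℕ} [NeZero N] (χ : DirichletCharacter ℂ N)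
    {s : ℂ} (hs : 0 < s.re) : χ.completedLFunction s = χ.LFunction s * χ.gammaFactor s := by
  rw [χ.LFunction_eq_completed_div_gammaFactor s (Or.inl (by rintro rfl; simp at hs)),
    div_mul_cancel₀ _ (gammaFactor_ne_zero_of_re_pos χ hs)]

lemma norm_rootNumber {N : ℕ} [NeZero N] {χ : DirichletCharacter ℂ N} (hχ : χ.IsPrimitive) :
    ‖χ.rootNumber‖ = 1 := by
  have hχ_inv : χ⁻¹.IsPrimitive := by
    rwa [DirichletCharacter.isPrimitive_def, DirichletCharacter.conductor_inv]
  have hforth := hχ.completedLFunction_one_sub (1 - 2)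
  have hback := hχ_inv.completedLFunction_one_sub 2
  rw [inv_inv] at hback
  rw [sub_sub_cancel, hback] at hforth
  have hΛ : χ.completedLFunction 2 ≠ 0 := by
    rw [completedLFunction_eq_mul_gammaFactor χ (by simp)]
    exact mul_ne_zero (χ.LFunction_ne_zero_of_one_le_re (.inr (by norm_num)) (by simp))
      (gammaFactor_ne_zero_of_re_pos χ (by simp))
  have hpow : (N : ℂ) ^ ((1 : ℂ) - 2 - 1 / 2) * (N : ℂ) ^ ((2 : ℂ) - 1 / 2) = 1 := by
    rw [← Complex.cpow_add _ _ (NeZero.ne (N : ℂ))]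
    norm_num
  have hmul : χ.rootNumber * χ⁻¹.rootNumber = 1 := by
    refine mul_right_cancel₀ hΛ ?_
    linear_combination -hforth -
      χ.rootNumber * χ⁻¹.rootNumber * χ.completedLFunction 2 * hpow
  have hsq := congrArg norm hmul
  rw [norm_mul, norm_rootNumber_inv, norm_one, ← sq] at hsq
  exact (pow_eq_one_iff_of_nonneg (norm_nonneg _) two_ne_zero).1 hsq

lemma norm_Gammaℝ_conj (s : ℂ) : ‖Complex.Gammaℝ (conj s)‖ = ‖Complex.Gammaℝ s‖ := by
  have hhalf : conj s / 2 = conj (s / 2) := by rw [map_div₀, map_ofNat]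
  rw [Complex.Gammaℝ_def, Complex.Gammaℝ_def, norm_mul, norm_mul, hhalf, Complex.Gamma_conj,
    Complex.norm_conj, Complex.norm_cpow_eq_rpow_re_of_pos Real.pi_pos,
    Complex.norm_cpow_eq_rpow_re_of_pos Real.pi_pos]
  simp

lemma norm_gammaFactor_inv_conj {N : ℕ} (χ : DirichletCharacter ℂ N) (s : ℂ) :
    ‖χ⁻¹.gammaFactor (conj s)‖ = ‖χ.gammaFactor s‖ := by
  rcases χ.even_or_odd with h | h
  · have h_inv : χ⁻¹.Even := by
      rw [DirichletCharacter.Even, MulChar.inv_apply_eq_inv, h, Ring.inverse_one]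
    rw [h.gammaFactor_def, h_inv.gammaFactor_def, norm_Gammaℝ_conj]
  · have h_inv : χ⁻¹.Odd := by
      rw [DirichletCharacter.Odd, MulChar.inv_apply_eq_inv, h, Ring.inverse_eq_inv', inv_neg_one]
    rw [h.gammaFactor_def, h_inv.gammaFactor_def, ← norm_Gammaℝ_conj, map_add, map_one,
      Complex.conj_conj]

lemma norm_Gammaℝ_add_two {s : ℂ} (hs : s ≠ 0) :
    ‖Complex.Gammaℝ (s + 2)‖ = ‖Complex.Gammaℝ s‖ * ‖s‖ / (2 * Real.pi) := by
  rw [Complex.Gammaℝ_add_two hs, norm_div, norm_div, norm_mul, Complex.norm_real,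
    Real.norm_of_nonneg Real.pi_pos.le, RCLike.norm_ofNat]
  ring

variable {w : ℂ}

lemma norm_add_one_of_re_eq (hw : w.re = -(1 / 2)) : ‖w + 1‖ = ‖w‖ := by
  rw [Complex.norm_eq_sqrt_sq_add_sq, Complex.norm_eq_sqrt_sq_add_sq]
  norm_num [hw]

lemma norm_gammaFactor_add_two_of_re_eq {N : ℕ} (χ : DirichletCharacter ℂ N)
    (hw : w.re = -(1 / 2)) :
    ‖χ.gammaFactor (w + 2)‖ = ‖χ.gammaFactor w‖ * ‖w + 1‖ / (2 * Real.pi) := by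
  rcases χ.even_or_odd with h | h
  · rw [h.gammaFactor_def, norm_Gammaℝ_add_two (by rintro rfl; norm_num at hw),
      norm_add_one_of_re_eq hw, h.gammaFactor_def]
  · rw [h.gammaFactor_def, h.gammaFactor_def, add_right_comm, norm_Gammaℝ_add_two]
    intro h₀
    have := congrArg Complex.re h₀
    norm_num [hw] at this

lemma gammaFactor_ne_zero_of_re_eq {N : ℕ} (χ : DirichletCharacter ℂ N)
    (hw : w.re = -(1 / 2)) : χ.gammaFactor w ≠ 0 := by
  have h2 : χ.gammaFactor (w + 2) ≠ 0 :=
    gammaFactor_ne_zero_of_re_pos χ (by norm_num [hw])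
  rw [← norm_ne_zero_iff, norm_gammaFactor_add_two_of_re_eq χ hw] at h2
  exact fun h₀ => h2 (by rw [h₀, norm_zero, zero_mul, zero_div])

theorem norm_LFunction_of_re_eq {N : ℕ} [NeZero N] {χ : DirichletCharacter ℂ N}
    (hχ : χ.IsPrimitive) (hw : w.re = -(1 / 2)) :
    ‖χ.LFunction w‖ = N * ‖χ.LFunction (w + 2)‖ * ‖w + 1‖ / (2 * Real.pi) := by
  have hconj : 1 - w = conj (w + 2) := by
    apply Complex.ext <;> norm_num [hw]
  have hw₀ : w ≠ 0 := by
    rintro rfl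
    norm_num at hw
  have hfe : ‖χ.completedLFunction w‖ = N * ‖χ⁻¹.completedLFunction (1 - w)‖ := by
    have := hχ.completedLFunction_one_sub (1 - w)
    rw [sub_sub_cancel] at this
    rw [this, norm_mul, norm_mul, norm_rootNumber hχ,
      Complex.norm_natCast_cpow_of_pos (NeZero.pos N)]
    norm_num [hw]
  have hγ := norm_ne_zero_iff.2 (gammaFactor_ne_zero_of_re_eq χ hw)
  rw [χ.LFunction_eq_completed_div_gammaFactor w (Or.inl hw₀), norm_div, hfe,
    completedLFunction_eq_mul_gammaFactor χ⁻¹ (by norm_num [hw]), norm_mul, hconj,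
    norm_LFunction_inv_conj χ (by norm_num [hw]), norm_gammaFactor_inv_conj,
    norm_gammaFactor_add_two_of_re_eq χ hw]
  field_simp

end FunctionalEquation

section ZeroSum

variable {N : ℕ} [NeZero N] (χ : DirichletCharacter ℂ N)

/-- The nontrivial zeros of `L(s, χ)`, i.e. its zeros in the open critical strip. -/
def nontrivialZeros : Set ℂ := {ρ | χ.LFunction ρ = 0 ∧ 0 < ρ.re ∧ ρ.re < 1}

open scoped Classical in
/-- The entire function `(s - 1) L(s, χ)`. For `χ = 1` the singularity at `s = 1` is filled in,
which the literal product does not do. -/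
noncomputable def poleFreeLFunction : ℂ → ℂ :=
  if χ = 1 then DirichletCharacter.LFunctionTrivChar₁ N else fun s => (s - 1) * χ.LFunction s

/-- `2π (v - 1) L(v, χ) / (N (v + 1) (v + 2) L(v + 2, χ))`, normalised so that the functional
equation bounds it by `1` on the line `Re v = -1/2`. -/
noncomputable def shiftQuotient (v : ℂ) : ℂ :=
  2 * Real.pi * poleFreeLFunction χ v / (N * (v + 1) * (v + 2) * χ.LFunction (v + 2))

lemma differentiable_poleFreeLFunction : Differentiable ℂ (poleFreeLFunction χ) := by
  rw [poleFreeLFunction]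
  split_ifs with h
  · exact DirichletCharacter.differentiable_LFunctionTrivChar₁ N
  · exact (differentiable_id.sub_const 1).mul (DirichletCharacter.differentiable_LFunction h)

variable {χ} in
lemma poleFreeLFunction_of_ne {s : ℂ} (hs : s ≠ 1) :
    poleFreeLFunction χ s = (s - 1) * χ.LFunction s := by
  rw [poleFreeLFunction]
  split_ifs with h
  · rw [h, DirichletCharacter.LFunctionTrivChar₁, Function.update_of_ne hs]
  · rfl

lemma norm_shiftQuotient {v : ℂ} (hv : v ≠ 1) :
    ‖shiftQuotient χ v‖ = 2 * Real.pi * ‖v - 1‖ * ‖χ.LFunction v‖ /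
      (N * ‖v + 1‖ * ‖v + 2‖ * ‖χ.LFunction (v + 2)‖) := by
  simp only [shiftQuotient, poleFreeLFunction_of_ne hv, norm_div, norm_mul, RCLike.norm_ofNat,
    Complex.norm_natCast, Complex.norm_real, Real.norm_of_nonneg Real.pi_pos.le, mul_assoc]

lemma add_natCast_ne_zero {v : ℂ} {n : ℕ} (hv : -n < v.re) : v + n ≠ 0 := by
  intro h
  have : v.re + n = 0 := by simpa using congrArg Complex.re h
  linarith

lemma LFunction_ne_zero_of_one_lt_re {s : ℂ} (hs : 1 < s.re) : χ.LFunction s ≠ 0 := by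
  refine χ.LFunction_ne_zero_of_one_le_re (.inr ?_) hs.le
  rintro rfl
  simp at hs

lemma shiftQuotient_denom_ne_zero {v : ℂ} (hv : -1 < v.re) :
    (N * (v + 1) * (v + 2) * χ.LFunction (v + 2) : ℂ) ≠ 0 := by
  have h1 : v + 1 ≠ 0 := by simpa using add_natCast_ne_zero (n := 1) (by simpa using hv)
  have h2 : v + 2 ≠ 0 := by
    simpa using add_natCast_ne_zero (n := 2) (by rw [Nat.cast_ofNat]; linarith)
  refine mul_ne_zero (mul_ne_zero (mul_ne_zero (NeZero.ne _) h1) h2)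
    (LFunction_ne_zero_of_one_lt_re χ ?_)
  rw [Complex.add_re, Complex.re_ofNat]
  linarith

lemma differentiableAt_shiftQuotient {v : ℂ} (hv : -1 < v.re) :
    DifferentiableAt ℂ (shiftQuotient χ) v := by
  have hne : v + 2 ≠ 1 := by
    intro h
    have : v.re + 2 = 1 := by simpa using congrArg Complex.re h
    linarith
  have hL : DifferentiableAt ℂ (fun v => χ.LFunction (v + 2)) v :=
    (χ.differentiableAt_LFunction (v + 2) (.inl hne)).comp v (by fun_prop)
  exact ((differentiableAt_const _).mul (differentiable_poleFreeLFunction χ v)).div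
    (DifferentiableAt.mul (by fun_prop) hL) (shiftQuotient_denom_ne_zero χ hv)

lemma norm_sub_one_le_norm_add_two {v : ℂ} (hv : -(1 / 2) ≤ v.re) : ‖v - 1‖ ≤ ‖v + 2‖ := by
  rw [Complex.norm_eq_sqrt_sq_add_sq, Complex.norm_eq_sqrt_sq_add_sq]
  refine Real.sqrt_le_sqrt ?_
  simp only [Complex.sub_re, Complex.add_re, Complex.sub_im, Complex.add_im, Complex.one_re,
    Complex.one_im, Complex.re_ofNat, Complex.im_ofNat]
  nlinarith

lemma norm_shiftQuotient_le_mul_norm_LFunction {v : ℂ} (hv : -(1 / 2) ≤ v.re) (hv₁ : v ≠ 1) :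
    ‖shiftQuotient χ v‖ ≤
      4 * Real.pi * (∑' n : ℕ, 1 / (n : ℝ) ^ (3 / 2 : ℝ)) * ‖χ.LFunction v‖ := by
  have hN : (1 : ℝ) ≤ N := by exact_mod_cast NeZero.one_le
  have h1 : 1 / 2 ≤ ‖v + 1‖ := by
    have := Complex.re_le_norm (v + 1)
    rw [Complex.add_re, Complex.one_re] at this
    linarith
  have hden : 1 / 2 * ‖v - 1‖ ≤ N * ‖v + 1‖ * ‖v + 2‖ := by
    calc 1 / 2 * ‖v - 1‖ = 1 * (1 / 2) * ‖v - 1‖ := by ring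
      _ ≤ _ := by
        gcongr
        exact norm_sub_one_le_norm_add_two hv
  have hden₀ : 0 < N * ‖v + 1‖ * ‖v + 2‖ := by
    simpa using norm_pos_iff.2 (left_ne_zero_of_mul
      (shiftQuotient_denom_ne_zero χ (v := v) (by linarith)))
  have hinv := norm_inv_LFunction_le_tsum χ (k := 3 / 2) (s := v + 2) (by norm_num)
    (by rw [Complex.add_re, Complex.re_ofNat]; linarith)
  calc ‖shiftQuotient χ v‖
      = ‖v - 1‖ / (N * ‖v + 1‖ * ‖v + 2‖) *
          (2 * Real.pi * ‖(χ.LFunction (v + 2))⁻¹‖ * ‖χ.LFunction v‖) := by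
        rw [norm_shiftQuotient χ hv₁, norm_inv]
        ring
    _ ≤ 2 * (2 * Real.pi * (∑' n : ℕ, 1 / (n : ℝ) ^ (3 / 2 : ℝ)) * ‖χ.LFunction v‖) := by
        gcongr
        rw [div_le_iff₀ hden₀]
        linarith
    _ = _ := by ring

lemma norm_shiftQuotient_le_one_of_re_eq {χ : DirichletCharacter ℂ N} (hχ : χ.IsPrimitive) {v : ℂ}
    (hv : v.re = -(1 / 2)) : ‖shiftQuotient χ v‖ ≤ 1 := by
  have hv₁ : v ≠ 1 := by
    rintro rfl
    norm_num at hv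
  have hden₀ : 0 < N * ‖v + 1‖ * ‖v + 2‖ * ‖χ.LFunction (v + 2)‖ := by
    simpa using norm_pos_iff.2 (shiftQuotient_denom_ne_zero χ (v := v) (by linarith))
  rw [norm_shiftQuotient χ hv₁, norm_LFunction_of_re_eq hχ hv, div_le_one hden₀]
  calc _ = N * ‖v + 1‖ * ‖v - 1‖ * ‖χ.LFunction (v + 2)‖ := by
        have := Real.pi_pos
        field_simp
    _ ≤ _ := by
      gcongr
      exact norm_sub_one_le_norm_add_two hv.ge

open Filter Asymptotics Bornology

lemma LFunction_isBigO_exp (a : ℝ) :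
    χ.LFunction =O[cobounded ℂ ⊓ 𝓟 {s | a ≤ s.re}] fun s => Real.exp (Real.pi * ‖s‖) := by
  obtain ⟨C, hC⟩ := exists_norm_LFunction_le_exp χ a 2
  refine .of_bound (|C| + ∑' n : ℕ, 1 / (n : ℝ) ^ (2 : ℝ)) (eventually_inf_principal.2 ?_)
  filter_upwards [tendsto_norm_cobounded_atTop.eventually (eventually_ge_atTop (|a| + 4))]
    with s hs (hre : a ≤ s.re)
  have hζ : 0 ≤ ∑' n : ℕ, 1 / (n : ℝ) ^ (2 : ℝ) := tsum_nonneg fun n => by positivity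
  rw [Real.norm_of_nonneg (Real.exp_pos _).le]
  rcases le_total s.re 2 with h | h
  · have him : 2 ≤ |s.im| := by
      have := Complex.norm_le_abs_re_add_abs_im s
      have : |s.re| ≤ |a| + 2 :=
        abs_le.2 ⟨by linarith [neg_abs_le a], by linarith [abs_nonneg a]⟩
      linarith
    calc ‖χ.LFunction s‖ ≤ C * Real.exp (Real.pi * |s.im|) := hC s ⟨hre, h⟩ him
      _ ≤ |C| * Real.exp (Real.pi * ‖s‖) := by
        gcongr
        · exact le_abs_self C
        · exact Complex.abs_im_le_norm s
      _ ≤ _ := by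
        gcongr
        linarith
  · calc ‖χ.LFunction s‖ ≤ ∑' n : ℕ, 1 / (n : ℝ) ^ (2 : ℝ) :=
          norm_LFunction_le_tsum χ one_lt_two h
      _ ≤ (∑' n : ℕ, 1 / (n : ℝ) ^ (2 : ℝ)) * Real.exp (Real.pi * ‖s‖) :=
          le_mul_of_one_le_right hζ (Real.one_le_exp (by positivity))
      _ ≤ _ := by
        gcongr
        linarith [abs_nonneg C]

lemma shiftQuotient_isBigO_exp :
    shiftQuotient χ =O[cobounded ℂ ⊓ 𝓟 {v | -(1 / 2) ≤ v.re}]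
      fun v => Real.exp (Real.pi * ‖v‖) := by
  refine IsBigO.trans (.of_bound (4 * Real.pi * ∑' n : ℕ, 1 / (n : ℝ) ^ (3 / 2 : ℝ))
    (eventually_inf_principal.2 ?_)) (LFunction_isBigO_exp χ _)
  filter_upwards [tendsto_norm_cobounded_atTop.eventually (eventually_gt_atTop 1)] with v hv hre
  refine norm_shiftQuotient_le_mul_norm_LFunction χ hre ?_
  rintro rfl
  simp at hv

lemma shiftQuotient_sub_half_isBigO_exp :
    (fun z => shiftQuotient χ (z - 1 / 2)) =O[cobounded ℂ ⊓ 𝓟 {z | 0 < z.re}]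
      fun z => Real.exp (Real.pi * ‖z‖ ^ (1 : ℝ)) := by
  have hshift : Tendsto (fun z : ℂ => z - 1 / 2) (cobounded ℂ ⊓ 𝓟 {z | 0 < z.re})
      (cobounded ℂ ⊓ 𝓟 {v | -(1 / 2) ≤ v.re}) := by
    refine (tendsto_sub_const_cobounded _).inf (tendsto_principal_principal.2 fun z hz => ?_)
    simpa using hz.le
  refine ((shiftQuotient_isBigO_exp χ).comp_tendsto hshift).trans
    (.of_bound (Real.exp Real.pi) (.of_forall fun z => ?_))
  have hnorm : ‖z - 1 / 2‖ ≤ 1 + ‖z‖ := by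
    have := norm_sub_le z (1 / 2)
    norm_num at this
    linarith
  rw [Function.comp_apply, Real.norm_of_nonneg (Real.exp_pos _).le,
    Real.norm_of_nonneg (Real.exp_pos _).le, Real.rpow_one, ← Real.exp_add, Real.exp_le_exp]
  nlinarith [Real.pi_pos]

lemma isBoundedUnder_norm_shiftQuotient_ofReal :
    IsBoundedUnder (· ≤ ·) atTop fun x : ℝ => ‖shiftQuotient χ (x - 1 / 2)‖ := by
  refine ⟨4 * Real.pi * (∑' n : ℕ, 1 / (n : ℝ) ^ (3 / 2 : ℝ)) *
    ∑' n : ℕ, 1 / (n : ℝ) ^ (2 : ℝ), eventually_map.2 ?_⟩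
  filter_upwards [eventually_gt_atTop 3] with x hx
  have hre : ((x : ℂ) - 1 / 2).re = x - 1 / 2 := by simp
  refine (norm_shiftQuotient_le_mul_norm_LFunction χ (by rw [hre]; linarith) ?_).trans ?_
  · intro h
    have := congrArg Complex.re h
    rw [hre, Complex.one_re] at this
    linarith
  · have : 0 ≤ ∑' n : ℕ, 1 / (n : ℝ) ^ (3 / 2 : ℝ) := tsum_nonneg fun n => by positivity
    gcongr
    exact norm_LFunction_le_tsum χ one_lt_two (by rw [hre]; linarith)

lemma diffContOnCl_shiftQuotient_sub_half :
    DiffContOnCl ℂ (fun z => shiftQuotient χ (z - 1 / 2)) {z | 0 < z.re} := by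
  refine DifferentiableOn.diffContOnCl ?_
  rw [Complex.closure_setOfPred_lt_re]
  intro z (hz : 0 ≤ z.re)
  have hre : -1 < (z - 1 / 2).re := by
    norm_num
    linarith
  exact (DifferentiableAt.comp (g := shiftQuotient χ) z (differentiableAt_shiftQuotient χ hre)
    (by fun_prop)).differentiableWithinAt

variable {χ}

lemma norm_shiftQuotient_le_prod_blaschke (hχ : χ.IsPrimitive) {S : Finset ℂ}
    (hS : ↑S ⊆ nontrivialZeros χ) {w : ℂ} (hw : -(1 / 2) ≤ w.re) :
    ‖shiftQuotient χ w‖ ≤ ∏ ρ ∈ S, ‖(w - ρ) / (w + 1 + conj ρ)‖ := by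
  have hbound : ∀ z : ℂ, 0 ≤ z.re → ‖shiftQuotient χ (z - 1 / 2)‖ ≤ 1 := fun z hz =>
    PhragmenLindelof.right_half_plane_of_bounded_on_real
      (f := fun z => shiftQuotient χ (z - 1 / 2)) (diffContOnCl_shiftQuotient_sub_half χ)
      ⟨1, one_lt_two, Real.pi, shiftQuotient_sub_half_isBigO_exp χ⟩
      (isBoundedUnder_norm_shiftQuotient_ofReal χ)
      (fun x => norm_shiftQuotient_le_one_of_re_eq hχ (by simp)) hz
  have hzero : ∀ a ∈ S.map (addRightEmbedding (1 / 2 : ℂ)),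
      0 < a.re ∧ shiftQuotient χ (a - 1 / 2) = 0 := by
    intro a ha
    obtain ⟨ρ, hρ, rfl⟩ := Finset.mem_map.1 ha
    obtain ⟨hL, hpos, hlt⟩ := hS hρ
    have hne : ρ ≠ 1 := by
      rintro rfl
      simp at hlt
    refine ⟨hpos.trans (by simp), ?_⟩
    simp [shiftQuotient, poleFreeLFunction_of_ne hne, hL]
  have hmain := norm_le_prod_blaschke (z := w + 1 / 2) _
    (diffContOnCl_shiftQuotient_sub_half χ) hbound hzero (by norm_num; linarith)
  rw [Finset.prod_map, add_sub_cancel_right] at hmain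
  refine hmain.trans_eq (Finset.prod_congr rfl fun ρ _ => ?_)
  congr 2
  · simp
  · simp only [addRightEmbedding_apply, map_add, map_div₀, map_one, map_ofNat]
    ring

lemma norm_LFunction_add_two_le {w : ℂ} (hw : 2 ≤ w.re) :
    ‖χ.LFunction (w + 2)‖ ≤ Real.pi ^ 6 / 540 * ‖χ.LFunction w‖ := by
  have hζ4 : ‖χ.LFunction (w + 2)‖ ≤ Real.pi ^ 4 / 90 := by
    refine (norm_LFunction_le_tsum χ (k := 4) (by norm_num) ?_).trans_eq ?_
    · rw [Complex.add_re, Complex.re_ofNat]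
      linarith
    · exact_mod_cast hasSum_zeta_four.tsum_eq
  have hζ2 : ‖χ.LFunction w‖⁻¹ ≤ Real.pi ^ 2 / 6 := by
    rw [← norm_inv]
    refine (norm_inv_LFunction_le_tsum χ one_lt_two hw).trans_eq ?_
    exact_mod_cast hasSum_zeta_two.tsum_eq
  rw [inv_le_iff_one_le_mul₀
    (norm_pos_iff.2 (LFunction_ne_zero_of_one_lt_re χ (by linarith)))] at hζ2
  calc ‖χ.LFunction (w + 2)‖ ≤ Real.pi ^ 4 / 90 * 1 := by rwa [mul_one]
    _ ≤ Real.pi ^ 4 / 90 * (Real.pi ^ 2 / 6 * ‖χ.LFunction w‖) := by gcongr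
    _ = _ := by ring

lemma inv_le_norm_shiftQuotient {w : ℂ} (hw : 2 ≤ w.re) :
    (N * ‖w + 1‖ * ‖w + 2‖ * (Real.pi ^ 6 / 540) / (2 * Real.pi * ‖w - 1‖))⁻¹ ≤
      ‖shiftQuotient χ w‖ := by
  have hw₁ : w ≠ 1 := by
    rintro rfl
    norm_num at hw
  have hden₀ : 0 < N * ‖w + 1‖ * ‖w + 2‖ * ‖χ.LFunction (w + 2)‖ := by
    simpa using norm_pos_iff.2 (shiftQuotient_denom_ne_zero χ (v := w) (by linarith))
  have hprod₀ : 0 < N * ‖w + 1‖ * ‖w + 2‖ := pos_of_mul_pos_left hden₀ (norm_nonneg _)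
  rw [norm_shiftQuotient χ hw₁, inv_div, div_le_div_iff₀ (by positivity) hden₀]
  calc _ = 2 * Real.pi * ‖w - 1‖ * (N * ‖w + 1‖ * ‖w + 2‖) * ‖χ.LFunction (w + 2)‖ := by ring
    _ ≤ 2 * Real.pi * ‖w - 1‖ * (N * ‖w + 1‖ * ‖w + 2‖) *
        (Real.pi ^ 6 / 540 * ‖χ.LFunction w‖) := by
      gcongr
      exact norm_LFunction_add_two_le hw
    _ = _ := by ring

theorem sum_log_blaschke_le (hχ : χ.IsPrimitive) {S : Finset ℂ} (hS : ↑S ⊆ nontrivialZeros χ)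
    {w : ℂ} (hw : 2 ≤ w.re) :
    ∑ ρ ∈ S, Real.log (‖w + 1 + conj ρ‖ / ‖w - ρ‖) ≤
      Real.log (N * ‖w + 1‖ * ‖w + 2‖ * (Real.pi ^ 6 / 540) / (2 * Real.pi * ‖w - 1‖)) := by
  have hfactor : ∀ ρ ∈ S, ‖(w - ρ) / (w + 1 + conj ρ)‖ ≠ 0 := by
    intro ρ hρ
    obtain ⟨-, hpos, hlt⟩ := hS hρ
    refine norm_ne_zero_iff.2 (div_ne_zero (sub_ne_zero.2 ?_) (add_conj_ne_zero ?_ hpos))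
    · rintro rfl
      linarith
    · rw [Complex.add_re, Complex.one_re]
      linarith
  have hpos : 0 < N * ‖w + 1‖ * ‖w + 2‖ * (Real.pi ^ 6 / 540) / (2 * Real.pi * ‖w - 1‖) := by
    have h1 : 0 < ‖w - 1‖ := norm_pos_iff.2 (sub_ne_zero.2 (by rintro rfl; norm_num at hw))
    have hprod : 0 < N * ‖w + 1‖ * ‖w + 2‖ := by
      simpa using norm_pos_iff.2 (left_ne_zero_of_mul
        (shiftQuotient_denom_ne_zero χ (v := w) (by linarith)))
    positivity
  have hlog := Real.log_le_log (inv_pos.2 hpos)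
    ((inv_le_norm_shiftQuotient hw).trans
      (norm_shiftQuotient_le_prod_blaschke hχ hS (by linarith)))
  rw [Real.log_inv, Real.log_prod hfactor] at hlog
  rw [← neg_le_neg_iff, ← Finset.sum_neg_distrib]
  refine hlog.trans_eq (Finset.sum_congr rfl fun ρ _ => ?_)
  rw [norm_div, ← Real.log_inv, inv_div]

end ZeroSum

section ContourRotation

lemma integrableOn_rpow_mul_exp_linear_sub_sq {p c : ℝ} (m : ℝ) (hp : -1 < p) (hc : 0 < c) :
    IntegrableOn (fun r : ℝ => r ^ p * Real.exp (m * r - c * r ^ 2)) (Ioi 0) := by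
  refine Integrable.mono' ((integrableOn_rpow_mul_exp_neg_mul_sq (half_pos hc) hp).const_mul
    (Real.exp (m ^ 2 / (2 * c)))) (by fun_prop)
    ((ae_restrict_iff' measurableSet_Ioi).2 (.of_forall fun r (hr : 0 < r) => ?_))
  have hsq : 0 ≤ (m - c * r) ^ 2 / (2 * c) := by positivity
  have hcomplete : m ^ 2 / (2 * c) + -(c / 2) * r ^ 2 =
      m * r - c * r ^ 2 + (m - c * r) ^ 2 / (2 * c) := by
    field_simp
    ring
  rw [Real.norm_of_nonneg (by positivity), mul_left_comm, ← Real.exp_add]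
  gcongr
  linarith

/-- The entire function `ζ ↦ exp(-ζ²/2 + iLζ)`, whose Mellin transforms along rays are compared by
rotating the ray. -/
noncomputable def gaussianWave (L : ℝ) (ζ : ℂ) : ℂ :=
  Complex.exp (-ζ ^ 2 / 2 + Complex.I * L * ζ)

lemma hasDerivAt_gaussianWave (L : ℝ) (ζ : ℂ) :
    HasDerivAt (gaussianWave L) (gaussianWave L ζ * (-ζ + Complex.I * L)) ζ := by
  have hexp : HasDerivAt (fun ζ : ℂ => -ζ ^ 2 / 2 + Complex.I * L * ζ)
      (-((2 : ℕ) * ζ ^ (2 - 1)) / 2 + Complex.I * L * 1) ζ :=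
    ((hasDerivAt_pow 2 ζ).neg.div_const 2).add ((hasDerivAt_id ζ).const_mul _)
  have hderiv : -((2 : ℕ) * ζ ^ (2 - 1)) / 2 + Complex.I * L * 1 = -ζ + Complex.I * L := by
    push_cast
    ring
  exact hderiv ▸ hexp.cexp

@[fun_prop]
lemma continuous_gaussianWave (L : ℝ) : Continuous (gaussianWave L) := by
  unfold gaussianWave
  fun_prop

lemma norm_gaussianWave_mul_ofReal (L : ℝ) (z : ℂ) (r : ℝ) :
    ‖gaussianWave L (z * r)‖ =
      Real.exp (-(L * z.im) * r - (z.re ^ 2 - z.im ^ 2) / 2 * r ^ 2) := by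
  rw [gaussianWave, Complex.norm_exp]
  congr 1
  simp only [pow_two, Complex.add_re, Complex.div_ofNat_re, Complex.neg_re, Complex.mul_re,
    Complex.mul_im, Complex.ofReal_re, Complex.ofReal_im, Complex.I_re, Complex.I_im]
  ring

lemma norm_cpow_sub_one_smul {s : ℂ} {r : ℝ} (hr : 0 < r) (x : ℂ) :
    ‖(r : ℂ) ^ (s - 1) • x‖ = r ^ (s.re - 1) * ‖x‖ := by
  rw [norm_smul, Complex.norm_cpow_eq_rpow_re_of_pos hr, Complex.sub_re, Complex.one_re]

lemma mellinConvergent_gaussianWave (L : ℝ) {s z : ℂ} (hs : 0 < s.re)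
    (hz : 0 < z.re ^ 2 - z.im ^ 2) :
    MellinConvergent (fun r => gaussianWave L (z * r)) s := by
  refine Integrable.mono' (integrableOn_rpow_mul_exp_linear_sub_sq (p := s.re - 1)
    (c := (z.re ^ 2 - z.im ^ 2) / 2) (-(L * z.im)) (by linarith) (by linarith)) ?_
    ((ae_restrict_iff' measurableSet_Ioi).2 (.of_forall fun r (hr : 0 < r) => ?_))
  · exact Measurable.aestronglyMeasurable (by fun_prop)
  · rw [norm_cpow_sub_one_smul hr, norm_gaussianWave_mul_ofReal]

lemma norm_gaussianWave_mul_ofReal_le (L : ℝ) {v : ℂ} {c M r : ℝ} (hc : c ≤ v.re ^ 2 - v.im ^ 2)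
    (hM : ‖v‖ ≤ M) (hr : 0 ≤ r) :
    ‖gaussianWave L (v * r)‖ ≤ Real.exp (|L| * M * r - c / 2 * r ^ 2) := by
  have hlin : -(L * v.im) ≤ |L| * M := by
    refine (neg_le_abs _).trans ?_
    rw [abs_mul]
    gcongr
    exact (Complex.abs_im_le_norm v).trans hM
  rw [norm_gaussianWave_mul_ofReal]
  gcongr

lemma norm_deriv_mellin_integrand_gaussianWave_le (L : ℝ) {s v : ℂ} {c M r : ℝ}
    (hc : c ≤ v.re ^ 2 - v.im ^ 2) (hM : ‖v‖ ≤ M) (hr : 0 < r) :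
    ‖(r : ℂ) ^ (s - 1) • (gaussianWave L (v * r) * (-(v * r) + Complex.I * L) * r)‖ ≤
      M * (r ^ (s.re + 1) * Real.exp (|L| * M * r - c / 2 * r ^ 2)) +
        |L| * (r ^ s.re * Real.exp (|L| * M * r - c / 2 * r ^ 2)) := by
  have hlin : ‖-(v * r) + Complex.I * L‖ ≤ M * r + |L| := by
    refine (norm_add_le _ _).trans ?_
    simp only [norm_mul, norm_neg, Complex.norm_real, Real.norm_eq_abs, Complex.norm_I, one_mul,
      abs_of_pos hr]
    gcongr
  have hpow1 : r ^ s.re = r ^ (s.re - 1) * r := by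
    rw [← Real.rpow_add_one hr.ne', sub_add_cancel]
  have hpow2 : r ^ (s.re + 1) = r ^ (s.re - 1) * r * r := by
    rw [Real.rpow_add_one hr.ne', hpow1]
  have : 0 ≤ M := (norm_nonneg v).trans hM
  rw [norm_cpow_sub_one_smul hr, norm_mul, norm_mul, Complex.norm_real, Real.norm_of_nonneg hr.le]
  calc _ ≤ r ^ (s.re - 1) *
        (Real.exp (|L| * M * r - c / 2 * r ^ 2) * (M * r + |L|) * r) := by
        gcongr
        exact norm_gaussianWave_mul_ofReal_le L hc hM hr.le
    _ = _ := by
        rw [hpow1, hpow2]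
        ring

lemma differentiableAt_mellin_gaussianWave (L : ℝ) {s z : ℂ} (hs : 0 < s.re)
    (hz : 0 < z.re ^ 2 - z.im ^ 2) :
    DifferentiableAt ℂ (fun z => mellin (fun r => gaussianWave L (z * r)) s) z := by
  obtain ⟨c, hc₀, hc⟩ := exists_between hz
  have hopen : IsOpen {v : ℂ | c < v.re ^ 2 - v.im ^ 2 ∧ ‖v‖ < ‖z‖ + 1} :=
    (isOpen_lt continuous_const (by fun_prop : Continuous fun v : ℂ => v.re ^ 2 - v.im ^ 2)).inter
      (isOpen_lt continuous_norm continuous_const)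
  have hbound : ∀ p : ℝ, -1 < p → IntegrableOn (fun r : ℝ => r ^ p *
      Real.exp (|L| * (‖z‖ + 1) * r - c / 2 * r ^ 2)) (Ioi 0) := fun p hp =>
    integrableOn_rpow_mul_exp_linear_sub_sq _ hp (half_pos hc₀)
  refine (hasDerivAt_integral_of_dominated_loc_of_deriv_le (𝕜 := ℂ)
    (μ := volume.restrict (Ioi (0 : ℝ)))
    (F := fun z r => (r : ℂ) ^ (s - 1) • gaussianWave L (z * r))
    (F' := fun z r => (r : ℂ) ^ (s - 1) •
      (gaussianWave L (z * r) * (-(z * r) + Complex.I * L) * r))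
    (hopen.mem_nhds ⟨hc, by simp⟩) (.of_forall fun v => ?_)
    (mellinConvergent_gaussianWave L hs hz) ?_ ?_
    (((hbound (s.re + 1) (by linarith)).const_mul (‖z‖ + 1)).add
      ((hbound s.re (by linarith)).const_mul |L|)) ?_).2.differentiableAt
  · exact Measurable.aestronglyMeasurable (by fun_prop)
  · exact Measurable.aestronglyMeasurable (by fun_prop)
  · exact (ae_restrict_iff' measurableSet_Ioi).2 (.of_forall fun r (hr : 0 < r) v hv =>
      norm_deriv_mellin_integrand_gaussianWave_le L hv.1.le hv.2.le hr)
  · refine .of_forall fun r v _ => ?_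
    have hcomp : HasDerivAt (fun v => gaussianWave L (v * r))
        (gaussianWave L (v * r) * (-(v * r) + Complex.I * L) * r) v :=
      HasDerivAt.comp (h₂ := gaussianWave L) v (hasDerivAt_gaussianWave L (v * r))
        (hasDerivAt_mul_const (r : ℂ))
    exact hcomp.const_smul ((r : ℂ) ^ (s - 1))

lemma ofReal_cpow_mul_mellin_gaussianWave (L : ℝ) (s : ℂ) {x : ℝ} (hx : 0 < x) :
    (x : ℂ) ^ s * mellin (fun r => gaussianWave L (x * r)) s =
      mellin (fun r => gaussianWave L r) s := by
  have hscale := mellin_comp_mul_left (fun r : ℝ => gaussianWave L r) s hx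
  simp only [Complex.ofReal_mul] at hscale
  rw [hscale, smul_eq_mul, Complex.cpow_neg, mul_inv_cancel_left₀]
  exact Complex.cpow_ne_zero_iff.2 (.inl (by exact_mod_cast hx.ne'))

lemma convex_abs_im_lt_re : Convex ℝ {z : ℂ | |z.im| < z.re} := by
  have h : {z : ℂ | |z.im| < z.re} = {z | -z.re < z.im} ∩ {z | z.im < z.re} := by
    ext z
    exact abs_lt (a := z.im)
  have hlin₁ : IsLinearMap ℝ fun z : ℂ => -z.re - z.im := (-Complex.reLm - Complex.imLm).isLinear
  have hlin₂ : IsLinearMap ℝ fun z : ℂ => z.im - z.re := (Complex.imLm - Complex.reLm).isLinear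
  rw [h]
  simpa only [sub_neg] using (convex_halfSpace_lt hlin₁ 0).inter (convex_halfSpace_lt hlin₂ 0)

/-- Both sides are holomorphic in `z` on the sector `|Im z| < Re z`, and they agree for real `z` by
rescaling. -/
theorem mellin_gaussianWave_eq_cpow_mul (L : ℝ) {s z : ℂ} (hs : 0 < s.re) (hz : |z.im| < z.re) :
    mellin (fun r => gaussianWave L r) s =
      z ^ s * mellin (fun r => gaussianWave L (z * r)) s := by
  have hopen : IsOpen {z : ℂ | |z.im| < z.re} := isOpen_lt (by fun_prop) (by fun_prop)
  have hdiff : DifferentiableOn ℂ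
      (fun z => z ^ s * mellin (fun r => gaussianWave L (z * r)) s) {z | |z.im| < z.re} := by
    intro v (hv : |v.im| < v.re)
    refine ((DifferentiableAt.cpow (by fun_prop) (by fun_prop)
      (.inl ((abs_nonneg _).trans_lt hv))).mul
      (differentiableAt_mellin_gaussianWave L hs (sub_pos.2 ?_))).differentiableWithinAt
    exact sq_lt_sq.2 (hv.trans_le (le_abs_self _))
  have hreal : ∃ᶠ z in nhdsWithin (1 : ℂ) {1}ᶜ,
      z ^ s * mellin (fun r => gaussianWave L (z * r)) s =
        mellin (fun r => gaussianWave L r) s := by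
    have htendsto : Filter.Tendsto (fun x : ℝ => (x : ℂ)) (nhdsWithin 1 {1}ᶜ)
        (nhdsWithin (1 : ℂ) {1}ᶜ) :=
      (Complex.continuous_ofReal.tendsto' 1 1 Complex.ofReal_one).inf
        (Filter.tendsto_principal_principal.2 fun x hx => by simpa using hx)
    refine htendsto.frequently (Filter.Eventually.frequently ?_)
    filter_upwards [nhdsWithin_le_nhds (lt_mem_nhds one_pos)] with x hx
    exact ofReal_cpow_mul_mellin_gaussianWave L s hx
  exact ((hdiff.analyticOnNhd hopen).eqOn_of_preconnected_of_frequently_eq analyticOnNhd_const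
    convex_abs_im_lt_re.isPreconnected (by simp) hreal hz).symm

lemma Gdelta_eq_mellin_gaussianWave (δ : ℝ) (s : ℂ) :
    Gdelta δ s = mellin (fun r => gaussianWave (2 * Real.pi * δ) r) (s + 2) := by
  refine setIntegral_congr_fun measurableSet_Ioi fun t (ht : 0 < t) => ?_
  have hpow : (t : ℂ) ^ (s + 2 - 1) = (t : ℂ) ^ (s - 1) * (t : ℂ) ^ 2 := by
    rw [add_sub_right_comm, ← Nat.cast_ofNat,
      Complex.cpow_add _ _ (by exact_mod_cast ht.ne'), Complex.cpow_natCast]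
  have hexp : Complex.exp (-(t : ℂ) ^ 2 / 2 + Complex.I * ↑(2 * Real.pi * δ) * t) =
      Complex.exp (-(t : ℂ) ^ 2 / 2) * Complex.exp (2 * Real.pi * Complex.I * ↑(δ * t)) := by
    rw [← Complex.exp_add]
    congr 1
    push_cast
    ring
  simp only [smul_eq_mul, gaussianWave, e2pi, hexp, hpow]
  push_cast
  ring

lemma cos_two_mul_pos {φ : ℝ} (hφ : |φ| < Real.pi / 4) : 0 < Real.cos (2 * φ) :=
  Real.cos_pos_of_mem_Ioo ⟨by linarith [neg_abs_le φ], by linarith [le_abs_self φ]⟩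

lemma abs_sin_lt_cos {φ : ℝ} (hφ : |φ| < Real.pi / 4) : |Real.sin φ| < Real.cos φ := by
  have hcos : 0 < Real.cos φ := Real.cos_pos_of_mem_Ioo
    ⟨by linarith [neg_abs_le φ, Real.pi_pos], by linarith [le_abs_self φ, Real.pi_pos]⟩
  have hsq : 0 < Real.cos φ ^ 2 - Real.sin φ ^ 2 := Real.cos_two_mul' φ ▸ cos_two_mul_pos hφ
  exact abs_lt_of_sq_lt_sq (by linarith) hcos.le

lemma norm_Gdelta_le_exp_mul_integral (δ : ℝ) {s : ℂ} (hs : -2 < s.re) {φ : ℝ}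
    (hφ : |φ| < Real.pi / 4) :
    ‖Gdelta δ s‖ ≤ Real.exp (-(φ * s.im)) * ∫ r in Ioi (0 : ℝ), r ^ (s.re + 1) *
      Real.exp (-(2 * Real.pi * δ * Real.sin φ) * r - Real.cos (2 * φ) / 2 * r ^ 2) := by
  set z : ℂ := Complex.exp (φ * Complex.I) with hz
  have hre : z.re = Real.cos φ := Complex.exp_ofReal_mul_I_re φ
  have him : z.im = Real.sin φ := Complex.exp_ofReal_mul_I_im φ
  have harg : z.arg = φ := by
    rw [hz, Complex.exp_mul_I]
    exact Complex.arg_cos_add_sin_mul_I ⟨by linarith [neg_abs_le φ, Real.pi_pos],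
      by linarith [le_abs_self φ, Real.pi_pos]⟩
  have hcpow : ‖z ^ (s + 2)‖ = Real.exp (-(φ * s.im)) := by
    rw [Complex.norm_cpow_of_ne_zero (Complex.exp_ne_zero _), Complex.norm_exp_ofReal_mul_I, harg,
      Real.one_rpow, Real.exp_neg]
    simp
  have hre₂ : (s + 2).re - 1 = s.re + 1 := by
    rw [Complex.add_re, Complex.re_ofNat]
    ring
  have hsector : |z.im| < z.re := by simpa only [hre, him] using abs_sin_lt_cos hφ
  rw [Gdelta_eq_mellin_gaussianWave, mellin_gaussianWave_eq_cpow_mul _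
    (by linarith : 0 < (s + 2).re) hsector, norm_mul, hcpow]
  gcongr
  refine (norm_integral_le_integral_norm _).trans_eq
    (setIntegral_congr_fun measurableSet_Ioi fun r (hr : 0 < r) => ?_)
  simp only [norm_cpow_sub_one_smul hr, norm_gaussianWave_mul_ofReal, hre, him,
    Real.cos_two_mul', hre₂]

end ContourRotation

section KernelDomination

lemma taylor_five_le_exp {v : ℝ} (hv : 0 ≤ v) :
    1 + v + v ^ 2 / 2 + v ^ 3 / 6 + v ^ 4 / 24 + v ^ 5 / 120 ≤ Real.exp v := by
  simpa [Finset.sum_range_succ, Nat.factorial] using Real.sum_le_exp_of_nonneg hv 6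

lemma one_add_mul_sq_le_exp {v : ℝ} (hv : 0 ≤ v) : 1 + 3 / 2 * v ^ 2 ≤ Real.exp v := by
  have hquot : 0 ≤ 1 - v + v ^ 2 / 6 + v ^ 3 / 24 + v ^ 4 / 120 := by
    nlinarith [mul_nonneg hv (sq_nonneg (v - 1.75)), sq_nonneg (v ^ 2 - 3), sq_nonneg (v - 1.555)]
  linarith [taylor_five_le_exp hv, mul_nonneg hv hquot]

lemma norm_add_conj_sq_eq_re_im (z a : ℂ) :
    ‖z + conj a‖ ^ 2 = (z.re + a.re) ^ 2 + (z.im - a.im) ^ 2 := by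
  rw [← Complex.normSq_eq_norm_sq, Complex.normSq_apply]
  simp only [Complex.add_re, Complex.add_im, Complex.conj_re, Complex.conj_im]
  ring

lemma norm_sub_sq_eq_re_im (z a : ℂ) : ‖z - a‖ ^ 2 = (z.re - a.re) ^ 2 + (z.im - a.im) ^ 2 := by
  rw [← Complex.normSq_eq_norm_sq, Complex.normSq_apply]
  simp only [Complex.sub_re, Complex.sub_im]
  ring

/-- This is `log (1 + x) ≥ 2x / (x + 2)` for `1 + x = ‖z + conj a‖² / ‖z - a‖²`. -/
lemma div_le_log_norm_add_conj_div_norm_sub {z a : ℂ} (ha : 0 < a.re) (hz : a.re < z.re) :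
    2 * z.re * a.re / (z.re ^ 2 + a.re ^ 2 + (z.im - a.im) ^ 2) ≤
      Real.log (‖z + conj a‖ / ‖z - a‖) := by
  set b : ℝ := (z.re - a.re) ^ 2 + (z.im - a.im) ^ 2 with hb
  have hre : 0 < z.re := ha.trans hz
  have hb₀ : 0 < b := by
    have : 0 < z.re - a.re := sub_pos.2 hz
    positivity
  have hsq : (‖z + conj a‖ / ‖z - a‖) ^ 2 = 1 + 4 * z.re * a.re / b := by
    rw [div_pow, norm_add_conj_sq_eq_re_im, norm_sub_sq_eq_re_im, ← hb]
    field_simp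
    rw [hb]
    ring
  have hlog : 2 * Real.log (‖z + conj a‖ / ‖z - a‖) = Real.log (1 + 4 * z.re * a.re / b) := by
    rw [← hsq, Real.log_pow, Nat.cast_ofNat]
  have hpade := Real.le_log_one_add_of_nonneg (x := 4 * z.re * a.re / b) (by positivity)
  have hsum : 4 * z.re * a.re + 2 * b = 2 * (z.re ^ 2 + a.re ^ 2 + (z.im - a.im) ^ 2) := by
    rw [hb]
    ring
  have hfrac : 2 * (4 * z.re * a.re / b) / (4 * z.re * a.re / b + 2) =
      2 * (2 * z.re * a.re / (z.re ^ 2 + a.re ^ 2 + (z.im - a.im) ^ 2)) := by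
    rw [div_add' _ _ _ hb₀.ne', hsum]
    field_simp
    ring
  rw [hfrac, ← hlog] at hpade
  linarith

lemma mul_le_exp_mul_log_blaschke {θ : ℝ} (hθ : 0 ≤ θ) {w ρ : ℂ} (hw : 1 ≤ w.re)
    (hwθ : 3 / 2 * θ ^ 2 * ((w.re + 1 / 2) ^ 2 + 9 / 4) ≤ 1) (hρ₀ : 0 < ρ.re) (hρ₁ : ρ.re < 1) :
    3 * (w.re + 1 / 2) * θ ^ 2 * (ρ.re + 1 / 2) ≤
      Real.exp (θ * |w.im - ρ.im|) * Real.log (‖w + 1 + conj ρ‖ / ‖w - ρ‖) := by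
  set a : ℝ := w.re + 1 / 2 with ha
  set h : ℝ := ρ.re + 1 / 2 with hh
  set d : ℝ := w.im - ρ.im
  have ha₀ : 0 < a := by linarith
  have hh₀ : 0 < h := by linarith
  have hlog : 2 * a * h / (a ^ 2 + h ^ 2 + d ^ 2) ≤
      Real.log (‖w + 1 + conj ρ‖ / ‖w - ρ‖) := by
    have hshift : w + 1 / 2 + conj (ρ + 1 / 2) = w + 1 + conj ρ := by
      simp only [map_add, map_div₀, map_one, map_ofNat]
      ring
    have hkernel := div_le_log_norm_add_conj_div_norm_sub (z := w + 1 / 2) (a := ρ + 1 / 2)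
      (by simpa [hh] using hh₀) (by simpa using by linarith)
    rw [hshift, add_sub_add_right_eq_sub] at hkernel
    simpa [ha, hh] using hkernel
  have hexp : 3 / 2 * θ ^ 2 * (a ^ 2 + h ^ 2 + d ^ 2) ≤ Real.exp (θ * |d|) := by
    have hh₂ : h ^ 2 ≤ 9 / 4 := by nlinarith
    have hquad := one_add_mul_sq_le_exp (v := θ * |d|) (by positivity)
    rw [mul_pow, sq_abs] at hquad
    linarith [mul_le_mul_of_nonneg_left hh₂ (by positivity : 0 ≤ 3 / 2 * θ ^ 2)]
  calc 3 * a * θ ^ 2 * h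
      = 3 / 2 * θ ^ 2 * (a ^ 2 + h ^ 2 + d ^ 2) * (2 * a * h / (a ^ 2 + h ^ 2 + d ^ 2)) := by
        field_simp
    _ ≤ _ := by gcongr

end KernelDomination

section GaussianMoment

lemma rpow_add_one_le_mul_sq_add {r β : ℝ} (hr : 0 < r) (h₀ : 0 ≤ β) (h₁ : β ≤ 1) :
    r ^ (β + 1) ≤ 2 / 3 * (β + 1 / 2) * (r ^ 2 + 9 / 4) := by
  have hamgm : r ^ β ≤ 1 - β + β * r := by
    simpa using Real.geom_mean_le_arith_mean2_weighted (sub_nonneg.2 h₁) h₀ zero_le_one hr.le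
      (sub_add_cancel 1 β)
  calc r ^ (β + 1) = r ^ β * r := Real.rpow_add_one hr.ne' β
    _ ≤ (1 - β + β * r) * r := by gcongr
    _ ≤ _ := by nlinarith [mul_nonneg (sub_nonneg.2 h₁) (sq_nonneg (r - 3 / 2))]

/-- The half-line Gaussian integral with quadratic weight `r² + 9/4`. Up to the factor
`2/3 · (β + 1/2)`, this weight dominates `r ^ (β + 1)` for all `0 ≤ β ≤ 1`. -/
noncomputable def gaussianHalfMoment (c m : ℝ) : ℝ :=
  ∫ r in Ioi (0 : ℝ), (r ^ 2 + 9 / 4) * Real.exp (m * r - c / 2 * r ^ 2)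

lemma gaussianHalfMoment_nonneg (c m : ℝ) : 0 ≤ gaussianHalfMoment c m :=
  setIntegral_nonneg measurableSet_Ioi fun r _ => by positivity

lemma integrableOn_gaussianHalfMoment {c : ℝ} (m : ℝ) (hc : 0 < c) :
    IntegrableOn (fun r => (r ^ 2 + 9 / 4) * Real.exp (m * r - c / 2 * r ^ 2)) (Ioi 0) := by
  have hpow : ∀ p : ℝ, -1 < p → IntegrableOn (fun r : ℝ => r ^ p *
      Real.exp (m * r - c / 2 * r ^ 2)) (Ioi 0) := fun p hp =>
    integrableOn_rpow_mul_exp_linear_sub_sq m hp (half_pos hc)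
  refine ((hpow 2 (by norm_num)).add ((hpow 0 (by norm_num)).const_mul (9 / 4))).congr_fun
    (fun r _ => ?_) measurableSet_Ioi
  simp only [Pi.add_apply, Real.rpow_zero, Real.rpow_two]
  ring

lemma integral_rpow_mul_exp_le_gaussianHalfMoment {β c : ℝ} (m : ℝ) (h₀ : 0 ≤ β) (h₁ : β ≤ 1)
    (hc : 0 < c) :
    ∫ r in Ioi (0 : ℝ), r ^ (β + 1) * Real.exp (m * r - c / 2 * r ^ 2) ≤
      2 / 3 * (β + 1 / 2) * gaussianHalfMoment c m := by
  rw [gaussianHalfMoment, ← integral_const_mul]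
  refine setIntegral_mono_on (integrableOn_rpow_mul_exp_linear_sub_sq m (by linarith) (half_pos hc))
    ((integrableOn_gaussianHalfMoment m hc).const_mul _) measurableSet_Ioi fun r (hr : 0 < r) => ?_
  rw [← mul_assoc]
  gcongr
  exact rpow_add_one_le_mul_sq_add hr h₀ h₁

lemma gaussianHalfMoment_add_neg_eq_integral {c : ℝ} (m : ℝ) (hc : 0 < c) :
    gaussianHalfMoment c m + gaussianHalfMoment c (-m) =
      ∫ r : ℝ, (r ^ 2 + 9 / 4) * Real.exp (m * r - c / 2 * r ^ 2) := by
  set f : ℝ → ℝ := fun r => (r ^ 2 + 9 / 4) * Real.exp (m * r - c / 2 * r ^ 2) with hf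
  have hreflect : (fun r => f (-r)) =
      fun r => (r ^ 2 + 9 / 4) * Real.exp (-m * r - c / 2 * r ^ 2) := by
    ext r
    simp only [hf, neg_sq, mul_neg, neg_mul]
  have hleft : gaussianHalfMoment c (-m) = ∫ r in Iic 0, f r := by
    rw [gaussianHalfMoment, ← hreflect, integral_comp_neg_Ioi, neg_zero]
  have hintLeft : IntegrableOn f (Iic 0) := by
    have hneg : IntegrableOn (fun r => f (-r)) (Ici (-0)) := by
      rw [neg_zero, integrableOn_Ici_iff_integrableOn_Ioi, hreflect]
      exact integrableOn_gaussianHalfMoment (-m) hc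
    simpa using hneg.comp_neg_Iic
  rw [hleft, add_comm]
  exact intervalIntegral.integral_Iic_add_Ioi hintLeft (integrableOn_gaussianHalfMoment m hc)

lemma integral_sq_add_gaussianReal (μ a : ℝ) (v : NNReal) :
    ∫ x, (x ^ 2 + a) ∂ProbabilityTheory.gaussianReal μ v = μ ^ 2 + v + a := by
  have hmem := ProbabilityTheory.memLp_id_gaussianReal (μ := μ) (v := v) 2
  have hvar := ProbabilityTheory.variance_eq_sub hmem
  simp only [ProbabilityTheory.variance_id_gaussianReal, id, Pi.pow_apply,
    ProbabilityTheory.integral_id_gaussianReal] at hvar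
  rw [integral_add (by simpa using hmem.integrable_sq) (integrable_const _), integral_const,
    probReal_univ, one_smul]
  linarith

lemma gaussianHalfMoment_add_neg {c : ℝ} (m : ℝ) (hc : 0 < c) :
    gaussianHalfMoment c m + gaussianHalfMoment c (-m) =
      Real.exp (m ^ 2 / (2 * c)) * √(2 * Real.pi / c) * (m ^ 2 / c ^ 2 + 1 / c + 9 / 4) := by
  lift c to NNReal using hc.le
  have hv : c⁻¹ ≠ 0 := inv_ne_zero (by exact_mod_cast hc.ne')
  have hmoment := integral_sq_add_gaussianReal (m / c) (9 / 4) c⁻¹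
  rw [ProbabilityTheory.integral_gaussianReal_eq_integral_smul hv] at hmoment
  rw [gaussianHalfMoment_add_neg_eq_integral m hc, one_div, ← div_pow, ← NNReal.coe_inv, ← hmoment,
    ← integral_const_mul]
  congr 1 with x
  have : 0 < √(2 * Real.pi / c) := by positivity
  have hexp : Real.exp (m * x - c / 2 * x ^ 2) =
      Real.exp (m ^ 2 / (2 * c)) * Real.exp (-(x - m / c) ^ 2 / (2 * (c : ℝ)⁻¹)) := by
    rw [← Real.exp_add]
    congr 1
    field_simp
    ring
  rw [ProbabilityTheory.gaussianPDFReal, smul_eq_mul, NNReal.coe_inv, ← div_eq_mul_inv, hexp]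
  field_simp

end GaussianMoment

section SumOverZeros

/-- Rotating the ray of integration towards the zero, i.e. with `φ` of the sign of `Im ρ`, gains
`e^{-|φ Im ρ|}`. -/
lemma norm_Gdelta_le_mul_log_blaschke (δ : ℝ) {φ : ℝ} (hφ₀ : φ ≠ 0) (hφ : |φ| < Real.pi / 4)
    {w ρ : ℂ} (hw : 1 ≤ w.re) (hwφ : 3 / 2 * φ ^ 2 * ((w.re + 1 / 2) ^ 2 + 9 / 4) ≤ 1)
    (hρ₀ : 0 < ρ.re) (hρ₁ : ρ.re < 1) (hside : 0 ≤ φ * (ρ.im - w.im)) :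
    ‖Gdelta δ ρ‖ ≤ Real.exp (-(φ * w.im)) / (4.5 * (w.re + 1 / 2) * φ ^ 2) *
      gaussianHalfMoment (Real.cos (2 * φ)) (-(2 * Real.pi * δ * Real.sin φ)) *
      Real.log (‖w + 1 + conj ρ‖ / ‖w - ρ‖) := by
  set A := gaussianHalfMoment (Real.cos (2 * φ)) (-(2 * Real.pi * δ * Real.sin φ))
  set K := Real.log (‖w + 1 + conj ρ‖ / ‖w - ρ‖)
  have hA : 0 ≤ A := gaussianHalfMoment_nonneg _ _
  have hκ : 0 < 3 * (w.re + 1 / 2) * φ ^ 2 := by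
    have : 0 < w.re + 1 / 2 := by linarith
    positivity
  have hdist : |φ| * |w.im - ρ.im| = φ * (ρ.im - w.im) := by
    rw [abs_sub_comm, ← abs_mul, abs_of_nonneg hside]
  have hkernel := mul_le_exp_mul_log_blaschke (abs_nonneg φ) hw (by rwa [sq_abs]) hρ₀ hρ₁
  rw [hdist, sq_abs] at hkernel
  have hmoment := integral_rpow_mul_exp_le_gaussianHalfMoment
    (-(2 * Real.pi * δ * Real.sin φ)) hρ₀.le hρ₁.le (cos_two_mul_pos hφ)
  calc ‖Gdelta δ ρ‖ ≤ Real.exp (-(φ * ρ.im)) * (2 / 3 * (ρ.re + 1 / 2) * A) := by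
        refine (norm_Gdelta_le_exp_mul_integral δ (by linarith) hφ).trans ?_
        gcongr
    _ ≤ Real.exp (-(φ * ρ.im)) * (2 / 3 * (Real.exp (φ * (ρ.im - w.im)) * K /
          (3 * (w.re + 1 / 2) * φ ^ 2)) * A) := by
        gcongr
        rwa [le_div_iff₀ hκ, mul_comm]
    _ = Real.exp (-(φ * ρ.im)) * Real.exp (φ * (ρ.im - w.im)) /
          (4.5 * (w.re + 1 / 2) * φ ^ 2) * A * K := by
        field_simp
        ring
    _ = _ := by
        rw [← Real.exp_add]
        ring_nf

lemma norm_le_mul_of_abs_im_eq {z : ℂ} {T : ℝ} (hT : 0 ≤ T) (hre₀ : 0 ≤ z.re)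
    (hre : z.re ≤ 0.0443 * T) (him : |z.im| = T) : ‖z‖ ≤ 1.001 * T := by
  refine le_of_sq_le_sq ?_ (by positivity)
  have hsq : z.re ^ 2 ≤ (0.0443 * T) ^ 2 := by gcongr
  rw [← Complex.normSq_eq_norm_sq, Complex.normSq_apply, ← pow_two, ← pow_two, ← sq_abs z.im, him]
  nlinarith

lemma log_add_log_le_mul_log {x : ℝ} (hx : 15.9 ≤ x) :
    Real.log 1.79 + Real.log x ≤ 1.22 * Real.log x := by
  have hpow : (50 : ℕ) * Real.log 1.79 ≤ (11 : ℕ) * Real.log 15.9 := by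
    rw [← Real.log_pow, ← Real.log_pow]
    exact Real.log_le_log (by positivity) (by norm_num)
  push_cast at hpow
  linarith [Real.log_le_log (by norm_num) hx]

lemma le_conductor_mul_div (q : ℕ) [NeZero q] {T : ℝ} (hT : 100 ≤ T) :
    15.9 ≤ q * T / (2 * Real.pi) := by
  have hq : (1 : ℝ) ≤ q := by exact_mod_cast NeZero.one_le
  rw [le_div_iff₀ (by positivity)]
  nlinarith [Real.pi_lt_d6]

lemma log_conductor_mul_nonneg (q : ℕ) [NeZero q] {T : ℝ} (hT : 100 ≤ T) :
    0 ≤ Real.log (q * T / (2 * Real.pi)) :=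
  Real.log_nonneg (by linarith [le_conductor_mul_div q hT])

lemma log_conductor_mul_le (q : ℕ) [NeZero q] {T : ℝ} (hT : 100 ≤ T) {w : ℂ} (hre₀ : 0 ≤ w.re)
    (hre : w.re + 2 ≤ 0.0443 * T) (him : |w.im| = T) :
    Real.log (q * ‖w + 1‖ * ‖w + 2‖ * (Real.pi ^ 6 / 540) / (2 * Real.pi * ‖w - 1‖)) ≤
      1.22 * Real.log (q * T / (2 * Real.pi)) := by
  have hT₀ : 0 < T := by linarith
  have hq : (0 : ℝ) < q := by exact_mod_cast NeZero.pos q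
  have hx := le_conductor_mul_div q hT
  have hw₁ : ‖w + 1‖ ≤ 1.001 * T := norm_le_mul_of_abs_im_eq hT₀.le
    (by simpa using by linarith) (by simpa using by linarith) (by simpa using him)
  have hw₂ : ‖w + 2‖ ≤ 1.001 * T := norm_le_mul_of_abs_im_eq hT₀.le
    (by simpa using by linarith) (by simpa using by linarith) (by simpa using him)
  have hle_norm : ∀ a : ℝ, T ≤ ‖w + a‖ := fun a => by
    simpa [him] using Complex.abs_im_le_norm (w + a)
  have hw₁₀ : 0 < ‖w + 1‖ := hT₀.trans_le (by simpa using hle_norm 1)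
  have hw₂₀ : 0 < ‖w + 2‖ := hT₀.trans_le (by simpa using hle_norm 2)
  have hw₃ : T ≤ ‖w - 1‖ := by simpa [sub_eq_add_neg] using hle_norm (-1)
  have hpi : Real.pi ^ 6 / 540 ≤ 1.7804 := by
    have : Real.pi ^ 6 ≤ 3.141593 ^ 6 := by
      gcongr
      exact Real.pi_lt_d6.le
    linarith
  have hle : q * ‖w + 1‖ * ‖w + 2‖ * (Real.pi ^ 6 / 540) / (2 * Real.pi * ‖w - 1‖) ≤
      1.79 * (q * T / (2 * Real.pi)) := by
    calc _ ≤ q * (1.001 * T) * (1.001 * T) * 1.7804 / (2 * Real.pi * T) := by gcongr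
      _ = 1.001 * 1.001 * 1.7804 * (q * T / (2 * Real.pi)) := by field_simp
      _ ≤ _ := by
        gcongr
        norm_num
  have hw₃₀ : 0 < ‖w - 1‖ := hT₀.trans_le hw₃
  refine (Real.log_le_log (by positivity) hle).trans ?_
  rw [Real.log_mul (by norm_num) (by positivity)]
  exact log_add_log_le_mul_log hx

variable {q : ℕ} [NeZero q] {χ : DirichletCharacter ℂ q}

lemma sum_norm_Gdelta_le_of_side (hχ : χ.IsPrimitive) (δ : ℝ) {φ T : ℝ} (hφ₀ : φ ≠ 0)
    (hφ : |φ| < Real.pi / 4) (hT : 100 ≤ T) {w : ℂ} (hre₀ : 2 ≤ w.re)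
    (hre : w.re + 2 ≤ 0.0443 * T) (him : |w.im| = T)
    (hwφ : 3 / 2 * φ ^ 2 * ((w.re + 1 / 2) ^ 2 + 9 / 4) ≤ 1)
    {S : Finset ℂ} (hS : ↑S ⊆ nontrivialZeros χ) (hside : ∀ ρ ∈ S, 0 ≤ φ * (ρ.im - w.im)) :
    ∑ ρ ∈ S, ‖Gdelta δ ρ‖ ≤ Real.exp (-(φ * w.im)) / (4.5 * (w.re + 1 / 2) * φ ^ 2) *
      gaussianHalfMoment (Real.cos (2 * φ)) (-(2 * Real.pi * δ * Real.sin φ)) *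
      (1.22 * Real.log (q * T / (2 * Real.pi))) := by
  have hcoeff : 0 ≤ Real.exp (-(φ * w.im)) / (4.5 * (w.re + 1 / 2) * φ ^ 2) *
      gaussianHalfMoment (Real.cos (2 * φ)) (-(2 * Real.pi * δ * Real.sin φ)) := by
    have : 0 ≤ w.re + 1 / 2 := by linarith
    exact mul_nonneg (by positivity) (gaussianHalfMoment_nonneg _ _)
  calc ∑ ρ ∈ S, ‖Gdelta δ ρ‖
      ≤ ∑ ρ ∈ S, Real.exp (-(φ * w.im)) / (4.5 * (w.re + 1 / 2) * φ ^ 2) *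
          gaussianHalfMoment (Real.cos (2 * φ)) (-(2 * Real.pi * δ * Real.sin φ)) *
          Real.log (‖w + 1 + conj ρ‖ / ‖w - ρ‖) :=
        Finset.sum_le_sum fun ρ hρ => norm_Gdelta_le_mul_log_blaschke δ hφ₀ hφ (by linarith) hwφ
          (hS hρ).2.1 (hS hρ).2.2 (hside ρ hρ)
    _ ≤ _ := by
        rw [← Finset.mul_sum]
        gcongr
        exact (sum_log_blaschke_le hχ hS hre₀).trans
          (log_conductor_mul_le q hT (by linarith) hre him)

lemma sum_norm_Gdelta_le_gaussianHalfMoment_add (hχ : χ.IsPrimitive) (δ : ℝ) {θ s T : ℝ}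
    (hθ₀ : 0 < θ) (hθ : θ < Real.pi / 4) (hT : 100 ≤ T) (hs₀ : 5 / 2 ≤ s)
    (hs : s + 3 / 2 ≤ 0.0443 * T) (hsθ : 3 / 2 * θ ^ 2 * (s ^ 2 + 9 / 4) ≤ 1)
    {S : Finset ℂ} (hS : ↑S ⊆ nontrivialZeros χ) (hST : ∀ ρ ∈ S, T < |ρ.im|) :
    ∑ ρ ∈ S, ‖Gdelta δ ρ‖ ≤ Real.exp (-(θ * T)) / (4.5 * s * θ ^ 2) *
      (gaussianHalfMoment (Real.cos (2 * θ)) (2 * Real.pi * δ * Real.sin θ) +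
        gaussianHalfMoment (Real.cos (2 * θ)) (-(2 * Real.pi * δ * Real.sin θ))) *
      (1.22 * Real.log (q * T / (2 * Real.pi))) := by
  have hT₀ : 0 < T := by linarith
  have hupper := sum_norm_Gdelta_le_of_side hχ δ (φ := θ) (w := ⟨s - 1 / 2, T⟩)
    (S := S.filter (0 < ·.im)) hθ₀.ne' (by rwa [abs_of_pos hθ₀]) hT (by linarith) (by linarith)
    (abs_of_pos hT₀) (by simpa using hsθ)
    (fun ρ hρ => hS (Finset.filter_subset _ S hρ)) fun ρ hρ => by
      obtain ⟨hρS, hρ₀⟩ := Finset.mem_filter.1 hρ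
      have hρT := hST ρ hρS
      rw [abs_of_pos hρ₀] at hρT
      exact mul_nonneg hθ₀.le (by linarith)
  have hlower := sum_norm_Gdelta_le_of_side hχ δ (φ := -θ) (w := ⟨s - 1 / 2, -T⟩)
    (S := S.filter (¬0 < ·.im)) (neg_ne_zero.2 hθ₀.ne') (by rwa [abs_neg, abs_of_pos hθ₀]) hT
    (by linarith) (by linarith) (by rw [abs_neg, abs_of_pos hT₀]) (by simpa using hsθ)
    (fun ρ hρ => hS (Finset.filter_subset _ S hρ)) fun ρ hρ => by
      obtain ⟨hρS, hρ₀⟩ := Finset.mem_filter.1 hρ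
      have hρT := hST ρ hρS
      rw [abs_of_nonpos (not_lt.1 hρ₀)] at hρT
      exact mul_nonneg_of_nonpos_of_nonpos (by linarith) (by linarith)
  simp only [Real.sin_neg, mul_neg, neg_mul, neg_neg, Real.cos_neg, neg_sq, sub_add_cancel]
    at hupper hlower
  rw [← Finset.sum_filter_add_sum_filter_not S (0 < ·.im)]
  linarith

end SumOverZeros

section ParameterChoice

lemma exists_abscissa {θ : ℝ} (hθ₀ : 0 < θ) (hθ : θ ≤ 0.28) :
    ∃ s, 5 / 2 ≤ s ∧ 3 / 2 * θ ^ 2 * (s ^ 2 + 9 / 4) = 1 ∧ 0.7 ≤ s * θ ∧ s * θ ≤ 0.8165 := by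
  have hθsq : θ ^ 2 ≤ 0.28 ^ 2 := by gcongr
  refine ⟨√(2 / 3 - 9 / 4 * θ ^ 2) / θ, ?_⟩
  have hsq : √(2 / 3 - 9 / 4 * θ ^ 2) ^ 2 = 2 / 3 - 9 / 4 * θ ^ 2 := Real.sq_sqrt (by linarith)
  have hlower : 0.7 ≤ √(2 / 3 - 9 / 4 * θ ^ 2) := Real.le_sqrt_of_sq_le (by linarith)
  have hupper : √(2 / 3 - 9 / 4 * θ ^ 2) ≤ 0.8165 :=
    Real.sqrt_le_iff.2 ⟨by norm_num, by linarith [sq_nonneg θ]⟩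
  rw [div_mul_cancel₀ _ hθ₀.ne']
  refine ⟨?_, ?_, hlower, hupper⟩
  · rw [le_div_iff₀ hθ₀]
    linarith
  · rw [div_pow, hsq]
    field_simp
    ring

/-- The factor in front of the exponential in the bound for the sum over zeros, as a function of
`c = cos (2θ)`. The constants are `1.22` from `log_conductor_mul_le`, `3.15 = 4.5 · 0.7` from the
kernel, and `28 ≤ θT`. -/
noncomputable def decayPrefactor (c : ℝ) : ℝ :=
  1.22 / 3.15 * √(2 * Real.pi / c) * (4 * (14 / 75) / c ^ 2 + (1 / c + 9 / 4) / 28)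

lemma exp_div_mul_le_decayPrefactor {c m T θ Λ κ : ℝ} (hc : 0 < c) (hθ : 0 < θ)
    (hθT : 28 ≤ θ * T) (hκ : 3.15 * θ ≤ κ) (hmΛ : m ^ 2 ≤ 2 * Λ * (1 - c))
    (hmT : m ^ 2 ≤ 4 * (14 / 75) * T * θ) :
    Real.exp (-(θ * T)) / κ * (Real.exp (m ^ 2 / (2 * c)) * √(2 * Real.pi / c) *
        (m ^ 2 / c ^ 2 + 1 / c + 9 / 4)) * 1.22 ≤
      T * (decayPrefactor c * Real.exp (-(θ * T) + Λ * (1 / c - 1))) := by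
  have hT : 0 < T := pos_of_mul_pos_right (by linarith : 0 < θ * T) hθ.le
  have hκ₀ : 0 < κ := lt_of_lt_of_le (by positivity) hκ
  have hexp : Real.exp (-(θ * T)) * Real.exp (m ^ 2 / (2 * c)) ≤
      Real.exp (-(θ * T) + Λ * (1 / c - 1)) := by
    rw [← Real.exp_add]
    gcongr
    calc m ^ 2 / (2 * c) ≤ 2 * Λ * (1 - c) / (2 * c) := by gcongr
      _ = _ := by field_simp
  have hpoly : (m ^ 2 / c ^ 2 + 1 / c + 9 / 4) / κ ≤
      T * (4 * (14 / 75) / c ^ 2 + (1 / c + 9 / 4) / 28) / 3.15 := by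
    have hone : 1 / c + 9 / 4 ≤ (1 / c + 9 / 4) * (θ * T / 28) :=
      le_mul_of_one_le_right (by positivity) (by linarith)
    calc (m ^ 2 / c ^ 2 + 1 / c + 9 / 4) / κ
        ≤ (4 * (14 / 75) * T * θ / c ^ 2 + (1 / c + 9 / 4) * (θ * T / 28)) / (3.15 * θ) := by
          rw [add_assoc]
          gcongr
      _ = _ := by field_simp
  calc _ = Real.exp (-(θ * T)) * Real.exp (m ^ 2 / (2 * c)) * √(2 * Real.pi / c) *
        ((m ^ 2 / c ^ 2 + 1 / c + 9 / 4) / κ) * 1.22 := by ring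
    _ ≤ Real.exp (-(θ * T) + Λ * (1 / c - 1)) * √(2 * Real.pi / c) *
        (T * (4 * (14 / 75) / c ^ 2 + (1 / c + 9 / 4) / 28) / 3.15) * 1.22 := by gcongr
    _ = _ := by
        rw [decayPrefactor]
        ring

/-- The bound for the sum over zeros, in units of `T log (qT / 2π)`, that results from rotating by
the angle `θ = 14u/75` when `(πδ)² ≤ T / u`. -/
noncomputable def rotationBound (T u : ℝ) : ℝ :=
  decayPrefactor (Real.cos (2 * (14 / 75 * u))) *
    Real.exp (-(14 / 75 * u * T) + T / u * (1 / Real.cos (2 * (14 / 75 * u)) - 1))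

lemma sq_mul_sin_le_mul_one_sub_cos {δ Λ : ℝ} (θ : ℝ) (hδ : (Real.pi * δ) ^ 2 ≤ Λ) :
    (2 * Real.pi * δ * Real.sin θ) ^ 2 ≤ 2 * Λ * (1 - Real.cos (2 * θ)) := by
  calc (2 * Real.pi * δ * Real.sin θ) ^ 2
      = 4 * (Real.pi * δ) ^ 2 * Real.sin θ ^ 2 := by ring
    _ ≤ 4 * Λ * Real.sin θ ^ 2 := by gcongr
    _ = _ := by
      rw [Real.sin_sq_eq_half_sub]
      ring

theorem sum_norm_Gdelta_le_rotationBound {q : ℕ} [NeZero q] {χ : DirichletCharacter ℂ q}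
    (hχ : χ.IsPrimitive) {δ T u : ℝ} (hu₀ : 0 < u) (hu : u ≤ 3 / 2) (huT : 150 ≤ u * T)
    (hδ : (Real.pi * δ) ^ 2 ≤ T / u) {S : Finset ℂ} (hS : ↑S ⊆ nontrivialZeros χ)
    (hST : ∀ ρ ∈ S, T < |ρ.im|) :
    ∑ ρ ∈ S, ‖Gdelta δ ρ‖ ≤ T * Real.log (q * T / (2 * Real.pi)) * rotationBound T u := by
  have hT : 100 ≤ T := by nlinarith
  rw [rotationBound]
  set θ : ℝ := 14 / 75 * u with hθ
  have hθ₀ : 0 < θ := by positivity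
  have hθT : 28 ≤ θ * T := by
    rw [hθ, mul_assoc]
    linarith
  obtain ⟨s, hs₀, hsθ, hlower, hupper⟩ := exists_abscissa hθ₀ (by linarith)
  have hsT : s + 3 / 2 ≤ 0.0443 * T := by nlinarith
  have hquarter : θ < Real.pi / 4 := by linarith [Real.pi_gt_three]
  set c := Real.cos (2 * θ)
  set m := 2 * Real.pi * δ * Real.sin θ
  have hc₀ : 0 < c := cos_two_mul_pos (by rwa [abs_of_pos hθ₀])
  have hmΛ : m ^ 2 ≤ 2 * (T / u) * (1 - c) := sq_mul_sin_le_mul_one_sub_cos θ hδ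
  have hmT : m ^ 2 ≤ 4 * (14 / 75) * T * θ := by
    calc m ^ 2 ≤ 2 * (T / u) * (2 * θ ^ 2) := by
          refine hmΛ.trans (mul_le_mul_of_nonneg_left ?_ (by positivity))
          linarith [Real.sin_sq_le_sq (x := θ), Real.sin_sq_eq_half_sub θ]
      _ = _ := by
          rw [hθ]
          field_simp
          ring
  have hlog := log_conductor_mul_nonneg q hT
  have hside := exp_div_mul_le_decayPrefactor (κ := 4.5 * s * θ ^ 2) hc₀ hθ₀ hθT (by nlinarith)
    hmΛ hmT
  refine (sum_norm_Gdelta_le_gaussianHalfMoment_add hχ δ hθ₀ hquarter hT hs₀ hsT hsθ.le hS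
    hST).trans ?_
  rw [gaussianHalfMoment_add_neg _ hc₀]
  linarith [mul_le_mul_of_nonneg_right hside hlog]

end ParameterChoice

section Numerics

lemma poly_le_cos_two_mul {θ : ℝ} (hθ₀ : 0 ≤ θ) (hθ : θ ≤ 0.28) :
    1 - 2 * θ ^ 2 + 0.6666 * (θ ^ 2) ^ 2 - 0.0956 * (θ ^ 2) ^ 3 ≤ Real.cos (2 * θ) := by
  have hbound := Real.sin_bound (x := θ) (by rw [abs_of_nonneg hθ₀]; linarith)
  rw [abs_of_nonneg hθ₀, abs_le] at hbound
  have hsin₀ : 0 ≤ Real.sin θ :=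
    Real.sin_nonneg_of_nonneg_of_le_pi hθ₀ (by linarith [Real.pi_gt_three])
  have hsin : Real.sin θ ≤ θ - θ ^ 3 / 6 + θ ^ 5 / 100 := by linarith [hbound.2]
  have hsq : Real.sin θ ^ 2 ≤ (θ - θ ^ 3 / 6 + θ ^ 5 / 100) ^ 2 := by gcongr
  set x := θ ^ 2 with hx
  have hx₁ : x ≤ 0.0784 := by nlinarith
  have hexpand : (θ - θ ^ 3 / 6 + θ ^ 5 / 100) ^ 2 = x * (1 - x / 6 + x ^ 2 / 100) ^ 2 := by
    rw [hx]
    ring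
  have hx₅ : 0 ≤ x ^ 4 * (0.0784 - x) := mul_nonneg (by positivity) (by linarith)
  have hx₃ : 0 ≤ x ^ 3 := by positivity
  rw [hexpand, Real.sin_sq_eq_half_sub] at hsq
  nlinarith [sq_nonneg x, sq_nonneg (x ^ 2)]

lemma one_div_cos_two_mul_sub_one_le {θ : ℝ} (hθ₀ : 0 ≤ θ) (hθ : θ ≤ 0.28) :
    1 / Real.cos (2 * θ) - 1 ≤ 2 * θ ^ 2 + 3.823 * (θ ^ 2) ^ 2 := by
  have hcos := poly_le_cos_two_mul hθ₀ hθ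
  set x := θ ^ 2
  have hx₀ : 0 ≤ x := sq_nonneg θ
  have hx₁ : x ≤ 0.0784 := by nlinarith
  have hx₃ : x ^ 3 ≤ 0.0784 ^ 3 := by gcongr
  have hcos₀ : 0 < Real.cos (2 * θ) := by nlinarith [sq_nonneg x]
  have hremainder : 0 ≤ x ^ 2 * (0.4896 - 6.4084 * x + 2.357 * x ^ 2 - 0.3655 * x ^ 3) :=
    mul_nonneg (sq_nonneg x) (by nlinarith [sq_nonneg (x - 0.0784)])
  have hproduct :
      1 ≤ (2 * x + 3.823 * x ^ 2 + 1) * (1 - 2 * x + 0.6666 * x ^ 2 - 0.0956 * x ^ 3) := by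
    nlinarith [sq_nonneg x, sq_nonneg (x ^ 2), pow_nonneg hx₀ 3, pow_nonneg hx₀ 5]
  rw [sub_le_iff_le_add, div_le_iff₀ hcos₀]
  exact hproduct.trans (by gcongr)

lemma le_cos_two_mul_of_le {θ a : ℝ} (hθ₀ : 0 ≤ θ) (hθ : θ ≤ a) (ha : a ≤ 0.28) :
    1 - 2 * a ^ 2 + 0.6666 * (a ^ 2) ^ 2 - 0.0956 * (a ^ 2) ^ 3 ≤ Real.cos (2 * θ) :=
  (poly_le_cos_two_mul (hθ₀.trans hθ) ha).trans
    (Real.cos_le_cos_of_nonneg_of_le_pi (by linarith) (by linarith [Real.pi_gt_three])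
      (by linarith))

lemma decayPrefactor_le {c c₀ r : ℝ} (hc₀ : 0 < c₀) (hc : c₀ ≤ c) (hr₀ : 0 ≤ r)
    (hr : 6.283186 / c₀ ≤ r ^ 2) :
    decayPrefactor c ≤ 1.22 / 3.15 * r * (4 * (14 / 75) / c₀ ^ 2 + (1 / c₀ + 9 / 4) / 28) := by
  have hsqrt : √(2 * Real.pi / c) ≤ r := by
    rw [Real.sqrt_le_left hr₀]
    refine le_trans ?_ hr
    gcongr
    linarith [Real.pi_lt_d6]
  have hc' : 0 < c := hc₀.trans_le hc
  rw [decayPrefactor]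
  gcongr

lemma decayPrefactor_cos_le {u : ℝ} (hu₀ : 0 < u) (hu : u ≤ 3 / 2) :
    decayPrefactor (Real.cos (2 * (14 / 75 * u))) ≤ 1.23 := by
  have hcos := le_cos_two_mul_of_le (θ := 14 / 75 * u) (a := 14 / 75 * (3 / 2)) (by positivity)
    (by gcongr) (by norm_num)
  exact (decayPrefactor_le (c₀ := 0.847) (r := 2.7238) (by norm_num) (hcos.trans' (by norm_num))
    (by norm_num) (by norm_num)).trans (by norm_num)

lemma decayPrefactor_cos_le_of_le {u : ℝ} (hu₀ : 0 < u) (hu : u ≤ 1.3) :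
    decayPrefactor (Real.cos (2 * (14 / 75 * u))) ≤ 1.115 := by
  have hcos := le_cos_two_mul_of_le (θ := 14 / 75 * u) (a := 14 / 75 * 1.3) (by positivity)
    (by gcongr) (by norm_num)
  exact (decayPrefactor_le (c₀ := 0.884) (r := 2.6662) (by norm_num) (hcos.trans' (by norm_num))
    (by norm_num) (by norm_num)).trans (by norm_num)

lemma rotation_exponent_le {T u : ℝ} (hT : 0 ≤ T) (hu₀ : 0 < u) (hu : u ≤ 3 / 2) :
    -(14 / 75 * u * T) + T / u * (1 / Real.cos (2 * (14 / 75 * u)) - 1) ≤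
      -(T * u * (0.1169777 - 0.0046417 * u ^ 2)) := by
  have hcos := one_div_cos_two_mul_sub_one_le (θ := 14 / 75 * u) (by positivity) (by linarith)
  have hTu : 0 ≤ T * u * u ^ 2 := by positivity
  calc -(14 / 75 * u * T) + T / u * (1 / Real.cos (2 * (14 / 75 * u)) - 1)
      ≤ -(14 / 75 * u * T) + T / u *
          (2 * (14 / 75 * u) ^ 2 + 3.823 * ((14 / 75 * u) ^ 2) ^ 2) := by gcongr
    _ = -(T * u * (14 / 75 - 2 * (14 / 75) ^ 2 - 3.823 * (14 / 75) ^ 4 * u ^ 2)) := by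
        field_simp
        ring
    _ ≤ _ := by nlinarith [mul_nonneg hT hu₀.le]

lemma rotationBound_le_mul_exp {T u B : ℝ} (hT : 0 ≤ T) (hu₀ : 0 < u) (hu : u ≤ 3 / 2)
    (hB : decayPrefactor (Real.cos (2 * (14 / 75 * u))) ≤ B) (hB₀ : 0 ≤ B) :
    rotationBound T u ≤ B * Real.exp (-(T * u * (0.1169777 - 0.0046417 * u ^ 2))) :=
  mul_le_mul hB (Real.exp_le_exp.2 (rotation_exponent_le hT hu₀ hu)) (Real.exp_pos _).le hB₀

lemma rotationBound_three_halves_le {T : ℝ} (hT : 0 ≤ T) :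
    rotationBound T (3 / 2) ≤ 3.5 * Real.exp (-0.1598 * T) := by
  refine (rotationBound_le_mul_exp hT (by norm_num) le_rfl
    (decayPrefactor_cos_le (by norm_num) le_rfl) (by norm_num)).trans ?_
  gcongr
  · norm_num
  · linarith

lemma exp_mul_one_add_sub_le_exp (c y : ℝ) : Real.exp c * (1 + (y - c)) ≤ Real.exp y := by
  calc Real.exp c * (1 + (y - c)) ≤ Real.exp c * Real.exp (y - c) := by
        gcongr
        linarith [Real.add_one_le_exp (y - c)]
    _ = Real.exp y := by rw [← Real.exp_add, add_sub_cancel]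

lemma exp_neg_three_eq : Real.exp (-3) = Real.exp (-1) ^ 3 := by
  rw [← Real.exp_nat_mul]
  norm_num

lemma exp_neg_three_gt : 0.0497 < Real.exp (-3) := by
  rw [exp_neg_three_eq]
  exact lt_of_lt_of_le (by norm_num) (pow_le_pow_left₀ (by norm_num) Real.exp_neg_one_gt_d9.le 3)

lemma exp_neg_three_lt : Real.exp (-3) < 0.0498 := by
  rw [exp_neg_three_eq]
  exact lt_of_le_of_lt (pow_le_pow_left₀ (Real.exp_pos _).le Real.exp_neg_one_lt_d9.le 3)
    (by norm_num)

/-- Tangent lines of `exp` at `-3` and at `c` bound the two summands below by linear functions of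
`X`, whose slopes cancel favourably. -/
lemma le_mul_exp_add_mul_exp {X a c E B y₁ y₂ : ℝ} (hX : 0 ≤ X)
    (hy₁ : -((0.106534 - a) * X) ≤ y₁) (hy₂ : a * X ≤ y₂) (ha₀ : 0 ≤ a) (ha : a ≤ 0.106534)
    (hc : c ≤ 1) (hE : E ≤ Real.exp c) (hslope : 3.5 * 0.0498 * (0.106534 - a) ≤ 0.64 * E * a)
    (hconst : B ≤ 0.64 * E * (1 - c) + 3.5 * 0.0497 * 4) :
    B ≤ 3.5 * Real.exp y₁ + 0.64 * Real.exp y₂ := by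
  have htangent₁ := (exp_mul_one_add_sub_le_exp (-3) _).trans (Real.exp_le_exp.2 hy₁)
  have htangent₂ := (exp_mul_one_add_sub_le_exp c _).trans (Real.exp_le_exp.2 hy₂)
  have haX : 0 ≤ a * X := by positivity
  have hbX : 0 ≤ (0.106534 - a) * X := mul_nonneg (by linarith) hX
  have hE' := mul_le_mul_of_nonneg_right hE (by linarith : 0 ≤ 1 + (a * X - c))
  have h3 := mul_le_mul_of_nonneg_right exp_neg_three_lt.le hbX
  have hslopeX := mul_le_mul_of_nonneg_right hslope hX
  linarith [exp_neg_three_gt]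

lemma rotation_exponents_ge {T u a : ℝ} (hT : 0 ≤ T) (hu₀ : 0 ≤ u) (hu : u ≤ 3 / 2)
    (ha : a ≤ 0.0046417 * u * (3 / 2 + u)) :
    -((0.106534 - a) * (T * (3 / 2 - u))) ≤
        T * u * (0.1169777 - 0.0046417 * u ^ 2) - 0.1598 * T ∧
      a * (T * (3 / 2 - u)) ≤
        T * u * (0.1169777 - 0.0046417 * u ^ 2) - 0.1065 * (u * T) := by
  have hX : 0 ≤ T * (3 / 2 - u) := mul_nonneg hT (by linarith)
  have haX := mul_le_mul_of_nonneg_left ha hX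
  have huT : 0 ≤ u * T := by positivity
  constructor <;> nlinarith

lemma rotationBound_le_of_le {T u B : ℝ} (hT : 0 ≤ T) (hu₀ : 0 < u) (hu : u ≤ 3 / 2)
    (hB : decayPrefactor (Real.cos (2 * (14 / 75 * u))) ≤ B) (hB₀ : 0 ≤ B)
    (h : B ≤ 3.5 * Real.exp (T * u * (0.1169777 - 0.0046417 * u ^ 2) - 0.1598 * T) +
      0.64 * Real.exp (T * u * (0.1169777 - 0.0046417 * u ^ 2) - 0.1065 * (u * T))) :
    rotationBound T u ≤ 3.5 * Real.exp (-0.1598 * T) + 0.64 * Real.exp (-0.1065 * (u * T)) := by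
  have hexp : ∀ x y : ℝ, Real.exp (x - y) * Real.exp (-x) = Real.exp (-y) := fun x y => by
    rw [← Real.exp_add, sub_add_eq_add_sub, add_neg_cancel, zero_sub]
  refine (rotationBound_le_mul_exp hT hu₀ hu hB hB₀).trans
    ((mul_le_mul_of_nonneg_right h (Real.exp_pos _).le).trans_eq ?_)
  rw [add_mul, mul_assoc 3.5, mul_assoc 0.64, hexp, hexp, neg_mul, neg_mul]

lemma rotationBound_le {T u : ℝ} (hu₀ : 0 < u) (hu : u ≤ 3 / 2) (huT : 150 ≤ u * T) :
    rotationBound T u ≤ 3.5 * Real.exp (-0.1598 * T) + 0.64 * Real.exp (-0.1065 * (u * T)) := by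
  have hT : 0 ≤ T := by nlinarith
  have hX : 0 ≤ T * (3 / 2 - u) := mul_nonneg hT (by linarith)
  rcases le_total 1.3 u with hlarge | hsmall
  · obtain ⟨hy₁, hy₂⟩ := rotation_exponents_ge (a := 0.0168) hT hu₀.le hu (by nlinarith)
    exact rotationBound_le_of_le hT hu₀ hu (decayPrefactor_cos_le hu₀ hu) (by norm_num)
      (le_mul_exp_add_mul_exp (c := 0.4) (E := 1.4917) hX hy₁ hy₂ (by norm_num) (by norm_num)
        (by norm_num) ((taylor_five_le_exp (by norm_num)).trans' (by norm_num)) (by norm_num)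
        (by norm_num))
  refine rotationBound_le_of_le hT hu₀ hu (decayPrefactor_cos_le_of_le hu₀ hsmall)
    (by norm_num) ?_
  rcases le_total 1.15 u with hmiddle | hsmall'
  · obtain ⟨hy₁, hy₂⟩ := rotation_exponents_ge (a := 0.0141) hT hu₀.le hu (by nlinarith)
    exact le_mul_exp_add_mul_exp (c := 0.6) (E := 1.822) hX hy₁ hy₂ (by norm_num) (by norm_num)
      (by norm_num) ((taylor_five_le_exp (by norm_num)).trans' (by norm_num)) (by norm_num)
      (by norm_num)
  · have husq : u ^ 2 ≤ 1.15 ^ 2 := by gcongr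
    have hrate : 150 * 0.0043383 ≤ u * T * (0.0104777 - 0.0046417 * u ^ 2) :=
      mul_le_mul huT (by linarith) (by norm_num) (by linarith)
    have hy : 0.65 ≤ T * u * (0.1169777 - 0.0046417 * u ^ 2) - 0.1065 * (u * T) := by linarith
    have hexp : 1.91 ≤ Real.exp 0.65 :=
      (taylor_five_le_exp (by norm_num)).trans' (by norm_num)
    linarith [hexp.trans (Real.exp_le_exp.2 hy),
      Real.exp_pos (T * u * (0.1169777 - 0.0046417 * u ^ 2) - 0.1598 * T)]

lemma exists_rotationBound_le {δ T : ℝ} (hδ : 4 * Real.pi ^ 2 * |δ| ≤ T) (hT : 100 ≤ T) :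
    ∃ u, 0 < u ∧ u ≤ 3 / 2 ∧ 150 ≤ u * T ∧ (Real.pi * δ) ^ 2 ≤ T / u ∧
      rotationBound T u ≤ 3.5 * Real.exp (-0.1598 * T) +
        0.64 * Real.exp (-0.1065 * T ^ 2 / (Real.pi * δ) ^ 2) := by
  have hT₀ : 0 < T := by linarith
  rcases le_total ((Real.pi * δ) ^ 2) (2 * T / 3) with hsmall | hlarge
  · refine ⟨3 / 2, by norm_num, le_rfl, by linarith, by linarith, ?_⟩
    exact (rotationBound_three_halves_le hT₀.le).trans (le_add_of_nonneg_right (by positivity))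
  · set D := (Real.pi * δ) ^ 2 with hD
    have hD₀ : 0 < D := by linarith
    have hDT : 150 * D ≤ T ^ 2 := by
      calc 150 * D ≤ 16 * Real.pi ^ 2 * D := by
            gcongr
            nlinarith [Real.pi_gt_d6]
        _ = (4 * Real.pi ^ 2 * |δ|) ^ 2 := by
            rw [hD, mul_pow, mul_pow _ |δ|, sq_abs]
            ring
        _ ≤ T ^ 2 := by gcongr
    have hu₀ : 0 < T / D := by positivity
    have hu : T / D ≤ 3 / 2 := (div_le_iff₀ hD₀).2 (by linarith)
    have huT : 150 ≤ T / D * T := by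
      rw [div_mul_eq_mul_div, le_div_iff₀ hD₀]
      linarith
    refine ⟨T / D, hu₀, hu, huT, (div_div_cancel₀ hT₀.ne').ge, ?_⟩
    convert rotationBound_le hu₀ hu huT using 4
    ring

end Numerics

theorem sum_Gdelta_tsq_high_zeros_bound_general
    (δ : ℝ) (q : ℕ) [NeZero q] (χ : DirichletCharacter ℂ q) (hχ : χ.IsPrimitive)
    (T₀ : ℝ) (hT₀ : max (4 * Real.pi ^ 2 * |δ|) 100 ≤ T₀) :
    Summable (fun ρ : {ρ : ℂ // χ.LFunction ρ = 0 ∧ 0 < ρ.re ∧ ρ.re < 1 ∧ T₀ < |ρ.im|} =>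
      ‖Gdelta δ ρ‖) ∧
    (∑' ρ : {ρ : ℂ // χ.LFunction ρ = 0 ∧ 0 < ρ.re ∧ ρ.re < 1 ∧ T₀ < |ρ.im|}, ‖Gdelta δ ρ‖)
      ≤ T₀ * Real.log (q * T₀ / (2 * Real.pi))
          * (3.5 * Real.exp (-0.1598 * T₀)
            + 0.64 * Real.exp (-0.1065 * T₀ ^ 2 / (Real.pi * δ) ^ 2)) := by
  obtain ⟨hTδ, hT⟩ := max_le_iff.1 hT₀
  obtain ⟨u, hu₀, hu, huT, hδ, hbound⟩ := exists_rotationBound_le hTδ hT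
  have hlog := log_conductor_mul_nonneg q hT
  have hfinite : ∀ F : Finset {ρ : ℂ // χ.LFunction ρ = 0 ∧ 0 < ρ.re ∧ ρ.re < 1 ∧ T₀ < |ρ.im|},
      ∑ ρ ∈ F, ‖Gdelta δ ρ‖ ≤ T₀ * Real.log (q * T₀ / (2 * Real.pi)) *
        (3.5 * Real.exp (-0.1598 * T₀) +
          0.64 * Real.exp (-0.1065 * T₀ ^ 2 / (Real.pi * δ) ^ 2)) := by
    intro F
    have hF : ∀ ρ ∈ F.map (Function.Embedding.subtype _),
        χ.LFunction ρ = 0 ∧ 0 < ρ.re ∧ ρ.re < 1 ∧ T₀ < |ρ.im| :=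
      fun _ => Finset.property_of_mem_map_subtype F
    have hsum := sum_norm_Gdelta_le_rotationBound hχ hu₀ hu huT hδ
      (fun ρ hρ => ⟨(hF ρ hρ).1, (hF ρ hρ).2.1, (hF ρ hρ).2.2.1⟩) fun ρ hρ => (hF ρ hρ).2.2.2
    rw [Finset.sum_map] at hsum
    exact hsum.trans (by gcongr)
  exact ⟨summable_of_sum_le (fun _ => norm_nonneg _) hfinite,
    Real.tsum_le_of_sum_le (fun _ => norm_nonneg _) hfinite⟩

/-- **Lemma 4.7**: bound on the sum of `|G_δ(ρ)|` over high nontrivial zeros, for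
the smoothing `η(t) = t² e^{-t²/2}`. -/
theorem sum_Gdelta_tsq_high_zeros_bound
    (δ : ℝ) (q : ℕ) [NeZero q] (χ : DirichletCharacter ℂ q) (hχ : χ.IsPrimitive)
    (T₀ : ℝ) (hT₀ : max (4 * Real.pi^2 * |δ|) 100 ≤ T₀)
    (hGRH : ∀ ρ : ℂ, χ.LFunction ρ = 0 → 0 < ρ.re → ρ.re < 1 → |ρ.im| ≤ T₀ →
      ρ.re = 1/2) :
    (∑' ρ : {ρ : ℂ // χ.LFunction ρ = 0 ∧ 0 < ρ.re ∧ ρ.re < 1 ∧ T₀ < |ρ.im|},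
        ‖Gdelta δ ρ‖)
      ≤ T₀ * Real.log (q * T₀ / (2 * Real.pi))
          * (3.5 * Real.exp (-0.1598 * T₀)
            + 0.64 * Real.exp (-0.1065 * T₀^2 / (Real.pi * δ)^2)) :=
  (sum_Gdelta_tsq_high_zeros_bound_general δ q χ hχ T₀ hT₀).2
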